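/- Let k ≥ 1 and let S = S₁ ∪ ⋯ ∪ S_k ⊂ ℝ³, where each S_j is a unit sphere passing through the origin, i.e. S_j = {p ∈ ℝ³ : |p − v_j| = 1} for some v_j ∈ ℝ³ with |v_j| = 1. Then there exist a sequence of positive real numbers ε_n → 0, a sequence of smooth maps g̃_n : ∂𝔻 → ℝ³, and a sequence of maps u_n : closure(𝔻) → ℝ³, each continuous on the closed unit disk and C² on 𝔻, such that for every n: Δu_n = 2 (u_n)_x ∧ (u_n)_y at every point of 𝔻, u_n = ε_n g̃_n on ∂𝔻, and the images u_n(closure(𝔻)) converge to S in the Hausdorff distance as n → ∞. -/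

import Mathlib

noncomputable section

open Metric Filter

/-- `ℝ³` with the Euclidean norm. -/
abbrev R3 : Type := EuclideanSpace ℝ (Fin 3)

/-- The vector in `ℝ³` with the given coordinates. -/
def e3 (a b c : ℝ) : R3 := (WithLp.equiv 2 (Fin 3 → ℝ)).symm ![a, b, c]

/-- The cross product on `ℝ³`. -/
def cross (a b : R3) : R3 :=
  e3 (a 1 * b 2 - a 2 * b 1) (a 2 * b 0 - a 0 * b 2) (a 0 * b 1 - a 1 * b 0)

/-- Partial derivative in the `x` direction, identifying `ℝ²` with `ℂ` via `z = x + iy`. -/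
def pdx (u : ℂ → R3) (z : ℂ) : R3 := fderiv ℝ u z 1

/-- Partial derivative in the `y` direction. -/
def pdy (u : ℂ → R3) (z : ℂ) : R3 := fderiv ℝ u z Complex.I

/-- Componentwise Laplacian. -/
def lap (u : ℂ → R3) (z : ℂ) : R3 := pdx (pdx u) z + pdy (pdy u) z

/-- Smooth dependence of fixed points of uniform contractions. -/
theorem fp_smooth {EP Z : Type*} [NormedAddCommGroup EP] [NormedSpace ℂ EP] [CompleteSpace EP]
    [NormedAddCommGroup Z] [NormedSpace ℂ Z] [CompleteSpace Z]
    (W : Set EP) (hW : IsOpen W) (Φ : EP × Z → Z) (r : ℝ) (hr : 0 < r) (n : WithTop ℕ∞) (hn : n ≠ 0)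
    (hΦ : ∀ x ∈ W, ∀ X, ContDiffAt ℂ n Φ (x, X))
    (hlip : ∀ x ∈ W, ∀ X Y : Z, ‖X‖ < 2 * r → ‖Y‖ < 2 * r →
      ‖Φ (x, X) - Φ (x, Y)‖ ≤ 1 / 2 * ‖X - Y‖)
    (h0 : ∀ x ∈ W, ‖Φ (x, 0)‖ ≤ r / 2) :
    ∃ X : EP → Z, ContDiffOn ℂ n X W ∧ ∀ x ∈ W, ‖X x‖ ≤ r ∧ Φ (x, X x) = X x := by
  have key : ∀ x ∈ W, ∃ y : Z, ‖y‖ ≤ r ∧ Φ (x, y) = y := by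
    intro x hx
    have hmaps : Set.MapsTo (fun X => Φ (x, X)) (closedBall (0 : Z) r) (closedBall (0 : Z) r) := by
      intro X hX
      simp only [mem_closedBall, dist_zero_right] at hX ⊢
      have h1 := hlip x hx X 0 (by linarith) (by simpa using by linarith)
      have h2 := h0 x hx
      have h3 : ‖Φ (x, X)‖ ≤ ‖Φ (x, X) - Φ (x, 0)‖ + ‖Φ (x, 0)‖ := by
        simpa using norm_add_le (Φ (x, X) - Φ (x, 0)) (Φ (x, 0))
      simp only [sub_zero] at h1
      linarith
    have hc : ContractingWith (1 / 2) (hmaps.restrict _ _ _) := by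
      refine ⟨by rw [← NNReal.coe_lt_coe]; norm_num, LipschitzWith.of_dist_le_mul ?_⟩
      rintro ⟨a, ha⟩ ⟨b, hb⟩
      simp only [mem_closedBall, dist_zero_right] at ha hb
      have := hlip x hx a b (by linarith) (by linarith)
      simpa [Subtype.dist_eq, dist_eq_norm] using this
    obtain ⟨y, hy, hf, -⟩ := ContractingWith.exists_fixedPoint'
      (isClosed_closedBall.isComplete) hmaps hc (x := 0) (by simp [hr.le]) (edist_ne_top _ _)
    exact ⟨y, by simpa using hy, hf⟩
  classical
  let X : EP → Z := fun x => if hx : x ∈ W then (key x hx).choose else 0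
  have hX : ∀ x ∈ W, ‖X x‖ ≤ r ∧ Φ (x, X x) = X x := by
    intro x hx
    simp only [X, hx, dif_pos]
    exact (key x hx).choose_spec
  refine ⟨X, ?_, hX⟩
  intro x hx
  apply ContDiffAt.contDiffWithinAt
  obtain ⟨hXr, hXf⟩ := hX x hx
  let f : EP × Z → Z := fun y => y.2 - Φ y
  have hf : ContDiffAt ℂ n f (x, X x) := contDiffAt_snd.sub (hΦ x hx _)
  have hΦd : HasFDerivAt Φ (fderiv ℂ Φ (x, X x)) (x, X x) :=
    ((hΦ x hx (X x)).differentiableAt hn).hasFDerivAt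
  have hfd : fderiv ℂ f (x, X x) = ContinuousLinearMap.snd ℂ EP Z - fderiv ℂ Φ (x, X x) :=
    (hasFDerivAt_snd.sub hΦd).fderiv
  have hinv : (fderiv ℂ f (x, X x) ∘L .inr ℂ EP Z).IsInvertible := by
    have h1 : HasFDerivAt (fun Y => Φ (x, Y)) (fderiv ℂ Φ (x, X x) ∘L .inr ℂ EP Z) (X x) := by
      exact HasFDerivAt.comp (X x) hΦd (hasFDerivAt_prodMk_right x (X x))
    have h2 : ‖fderiv ℂ Φ (x, X x) ∘L .inr ℂ EP Z‖ ≤ 1 / 2 := by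
      refine h1.le_of_lip' (by norm_num) ?_
      have : ball (0 : Z) (2 * r) ∈ nhds (X x) :=
        isOpen_ball.mem_nhds (by simp; linarith)
      filter_upwards [this] with Y hY
      exact hlip x hx Y (X x) (by simpa using hY) (by linarith)
    have h3 : fderiv ℂ f (x, X x) ∘L .inr ℂ EP Z = 1 - fderiv ℂ Φ (x, X x) ∘L .inr ℂ EP Z := by
      rw [hfd]; ext Y; simp
    rw [h3]
    have hu : IsUnit (1 - fderiv ℂ Φ (x, X x) ∘L .inr ℂ EP Z) :=
      isUnit_one_sub_of_norm_lt_one (lt_of_le_of_lt h2 (by norm_num))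
    obtain ⟨u, hu⟩ := hu
    rw [← hu]
    exact ⟨ContinuousLinearEquiv.unitsEquiv ℂ Z u, rfl⟩
  have e1 := hf.eventually_apply_implicitFunction hn hinv
  have e2 := hf.contDiffAt_implicitFunction hn hinv
  have e3 := hf.implicitFunction_apply_self hn hinv
  refine e2.congr_of_eventuallyEq ?_
  have e4 : ∀ᶠ y in nhds x, ‖hf.implicitFunction hn hinv y‖ < 2 * r := by
    have : ContinuousAt (fun y => ‖hf.implicitFunction hn hinv y‖) x := e2.continuousAt.norm
    refine this.eventually_lt continuousAt_const ?_
    simp only at e3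
    rw [e3]; linarith
  filter_upwards [e1, e4, hW.mem_nhds hx] with y h1 h2 h3
  obtain ⟨g1, g2⟩ := hX y h3
  have h1' : hf.implicitFunction hn hinv y = Φ (y, hf.implicitFunction hn hinv y) := by
    simpa [f, hXf, sub_eq_zero] using h1
  have := hlip y h3 (X y) _ (by linarith) h2
  rw [← h1', g2] at this
  have h5 : ‖X y - hf.implicitFunction hn hinv y‖ = 0 :=
    le_antisymm (by linarith) (norm_nonneg _)
  exact sub_eq_zero.1 (norm_eq_zero.1 h5)

/-- The parameter square. -/
abbrev KK : Type := unitInterval × unitInterval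
/-- Continuous functions on the square. -/
abbrev AA : Type := C(KK, ℂ)
/-- Complex three-space. -/
abbrev VV : Type := Fin 3 → ℂ
/-- Continuous vector functions on the square. -/
abbrev YY : Type := Fin 3 → AA

/-- `-i` times the cross product. -/
def bt {R : Type*} [CommRing R] [Algebra ℂ R] (x y : Fin 3 → R) : Fin 3 → R :=
  fun i => (-Complex.I) • (x (i + 1) * y (i + 2) - x (i + 2) * y (i + 1))

theorem bt_add_left {R : Type*} [CommRing R] [Algebra ℂ R] (x x' y : Fin 3 → R) :
    bt (x + x') y = bt x y + bt x' y := by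
  funext i; simp only [bt, Pi.add_apply, ← smul_add]; congr 1; ring
theorem bt_add_right {R : Type*} [CommRing R] [Algebra ℂ R] (x y y' : Fin 3 → R) :
    bt x (y + y') = bt x y + bt x y' := by
  funext i; simp only [bt, Pi.add_apply, ← smul_add]; congr 1; ring
theorem bt_sub_left {R : Type*} [CommRing R] [Algebra ℂ R] (x x' y : Fin 3 → R) :
    bt (x - x') y = bt x y - bt x' y := by
  funext i; simp only [bt, Pi.sub_apply, ← smul_sub]; congr 1; ring
theorem bt_sub_right {R : Type*} [CommRing R] [Algebra ℂ R] (x y y' : Fin 3 → R) :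
    bt x (y - y') = bt x y - bt x y' := by
  funext i; simp only [bt, Pi.sub_apply, ← smul_sub]; congr 1; ring
theorem bt_zero_left {R : Type*} [CommRing R] [Algebra ℂ R] (y : Fin 3 → R) :
    bt 0 y = 0 := by funext i; simp [bt]
theorem bt_zero_right {R : Type*} [CommRing R] [Algebra ℂ R] (y : Fin 3 → R) :
    bt y 0 = 0 := by funext i; simp [bt]
theorem bt_smul_smul (c d : ℂ) (x y : VV) : bt (c • x) (d • y) = (c * d) • bt x y := by
  funext i; simp only [bt, Pi.smul_apply, smul_eq_mul]; ring
theorem bt_norm {R : Type*} [NormedCommRing R] [NormedAlgebra ℂ R] (x y : Fin 3 → R) :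
    ‖bt x y‖ ≤ 2 * ‖x‖ * ‖y‖ := by
  rw [pi_norm_le_iff_of_nonneg (by positivity)]
  intro i
  simp only [bt, norm_smul, norm_neg, Complex.norm_I, one_mul]
  have h : ∀ j k, ‖x j * y k‖ ≤ ‖x‖ * ‖y‖ := fun j k =>
    (norm_mul_le _ _).trans (mul_le_mul (norm_le_pi_norm x j) (norm_le_pi_norm y k)
      (norm_nonneg _) (norm_nonneg _))
  calc _ ≤ ‖x (i+1) * y (i+2)‖ + ‖x (i+2) * y (i+1)‖ := norm_sub_le _ _
    _ ≤ ‖x‖ * ‖y‖ + ‖x‖ * ‖y‖ := add_le_add (h _ _) (h _ _)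
    _ = _ := by ring

/-- Radial weights. -/
structure Wt where
  a : ℝ → ℝ
  A : ℝ → ℝ
  C : ℝ
  a_cont : Continuous a
  a_pos : ∀ s, 0 < a s
  a_mono : Monotone a
  A_deriv : ∀ s, HasDerivAt A (a s) s
  A_nonneg : ∀ s, 0 ≤ A s
  A_le : ∀ s ≤ 1, A s ≤ C

namespace Wt
variable (ω : Wt)

theorem A_cont : Continuous ω.A :=
  continuous_iff_continuousAt.2 fun s => (ω.A_deriv s).continuousAt

theorem A_mono : Monotone ω.A :=
  monotone_of_deriv_nonneg (fun s => (ω.A_deriv s).differentiableAt)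
    fun s => by rw [(ω.A_deriv s).deriv]; exact (ω.a_pos s).le

/-- The integrating kernel. -/
def ker (τ : ℝ) : ℝ := ω.a τ * Real.exp (32 * ω.A τ)

theorem ker_cont : Continuous ω.ker := by
  have := ω.a_cont; have := ω.A_cont; unfold ker; fun_prop

theorem ker_pos (τ : ℝ) : 0 < ω.ker τ := mul_pos (ω.a_pos τ) (Real.exp_pos _)

theorem ker_integral (t : ℝ) :
    ∫ τ in (0:ℝ)..t, ω.ker τ = (Real.exp (32 * ω.A t) - Real.exp (32 * ω.A 0)) / 32 := by
  have : ∀ τ ∈ Set.uIcc 0 t, HasDerivAt (fun τ => Real.exp (32 * ω.A τ) / 32) (ω.ker τ) τ := by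
    intro τ _
    have := (((ω.A_deriv τ).const_mul 32).exp).div_const 32
    refine this.congr_deriv ?_
    unfold ker; ring
  rw [intervalIntegral.integral_eq_sub_of_hasDerivAt this (ω.ker_cont.intervalIntegrable _ _)]
  ring

/-- Extension of a continuous function in the second variable. -/
def ext2 (f : AA) (s : unitInterval) (τ : ℝ) : ℂ := f (s, Set.projIcc 0 1 zero_le_one τ)

theorem ext2_cont (f : AA) : Continuous (fun x : unitInterval × ℝ => ext2 f x.1 x.2) := by
  unfold ext2
  exact f.continuous.comp (continuous_fst.prodMk (continuous_projIcc.comp continuous_snd))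

theorem ext2_norm (f : AA) (s : unitInterval) (τ : ℝ) : ‖ext2 f s τ‖ ≤ ‖f‖ := f.norm_coe_le_norm _

/-- Value of the Volterra operator. -/
def T1fun (f : AA) (x : KK) : ℂ :=
  ((Real.exp (-(32 * ω.A x.2)) : ℝ) : ℂ) * ∫ τ in (0:ℝ)..x.2, (ω.ker τ : ℂ) * ext2 f x.1 τ

theorem T1fun_cont (f : AA) : Continuous (ω.T1fun f) := by
  unfold T1fun
  have h1 := ω.A_cont
  have h2 := ω.ker_cont
  refine Continuous.mul (by fun_prop) ?_
  refine intervalIntegral.continuous_parametric_intervalIntegral_of_continuous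
    (f := fun (x : KK) τ => (ω.ker τ : ℂ) * ext2 f x.1 τ) ?_ (by fun_prop)
  have h3 : Continuous (fun x : KK × ℝ => ext2 f x.1.1 x.2) :=
    (ext2_cont f).comp (by fun_prop : Continuous fun x : KK × ℝ => (x.1.1, x.2))
  have : Continuous (fun x : KK × ℝ => (ω.ker x.2 : ℂ) * ext2 f x.1.1 x.2) := by fun_prop
  exact this

theorem T1fun_bound (f : AA) (x : KK) : ‖ω.T1fun f x‖ ≤ 1 / 32 * ‖f‖ := by
  have hx : (0:ℝ) ≤ x.2 := x.2.2.1
  have h1 : ‖∫ τ in (0:ℝ)..x.2, (ω.ker τ : ℂ) * ext2 f x.1 τ‖ ≤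
      ∫ τ in (0:ℝ)..x.2, ω.ker τ * ‖f‖ := by
    refine intervalIntegral.norm_integral_le_of_norm_le hx ?_ ?_
    · filter_upwards with τ _
      rw [norm_mul, Complex.norm_real, Real.norm_of_nonneg (ω.ker_pos τ).le]
      exact mul_le_mul_of_nonneg_left (ext2_norm _ _ _) (ω.ker_pos τ).le
    · exact (ω.ker_cont.mul continuous_const).intervalIntegrable _ _
  rw [intervalIntegral.integral_mul_const, ker_integral] at h1
  unfold T1fun
  rw [norm_mul, Complex.norm_real, Real.norm_of_nonneg (Real.exp_pos _).le]
  calc _ ≤ Real.exp (-(32 * ω.A x.2)) *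
        ((Real.exp (32 * ω.A x.2) - Real.exp (32 * ω.A 0)) / 32 * ‖f‖) :=
        mul_le_mul_of_nonneg_left h1 (Real.exp_pos _).le
    _ ≤ Real.exp (-(32 * ω.A x.2)) * (Real.exp (32 * ω.A x.2) / 32 * ‖f‖) := by
        gcongr
        linarith [Real.exp_pos (32 * ω.A 0)]
    _ = 1 / 32 * ‖f‖ * (Real.exp (-(32 * ω.A x.2)) * Real.exp (32 * ω.A x.2)) := by ring
    _ = _ := by rw [← Real.exp_add]; simp

/-- The Volterra operator in the second variable. -/
def T1 : AA →L[ℂ] AA :=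
  LinearMap.mkContinuous
    { toFun := fun f => ⟨ω.T1fun f, ω.T1fun_cont f⟩
      map_add' := by
        intro f g
        ext x
        have h : ∀ f : AA, IntervalIntegrable (fun τ => (ω.ker τ : ℂ) * ext2 f x.1 τ)
            MeasureTheory.volume 0 x.2 := fun f => by
          have h2 := ω.ker_cont
          have h3 : Continuous (fun τ : ℝ => ext2 f x.1 τ) :=
            (ext2_cont f).comp (by fun_prop : Continuous fun τ : ℝ => (x.1, τ))
          exact Continuous.intervalIntegrable (by fun_prop) _ _
        simp only [T1fun, ContinuousMap.coe_mk, ContinuousMap.add_apply]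
        rw [← mul_add, ← intervalIntegral.integral_add (h f) (h g)]
        congr 2; funext τ; simp [ext2, mul_add]
      map_smul' := by
        intro c f
        ext x
        simp only [T1fun, ContinuousMap.coe_mk, ContinuousMap.smul_apply, RingHom.id_apply,
          smul_eq_mul]
        have : (fun τ => (ω.ker τ : ℂ) * ext2 (c • f) x.1 τ) =
            fun τ => c * ((ω.ker τ : ℂ) * ext2 f x.1 τ) := by
          funext τ; simp [ext2]; ring
        rw [this, intervalIntegral.integral_const_mul]
        ring }
    (1 / 32) (by
      intro f
      rw [ContinuousMap.norm_le _ (by positivity)]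
      exact ω.T1fun_bound f)

theorem T1_apply (f : AA) (x : KK) : ω.T1 f x =
    ((Real.exp (-(32 * ω.A x.2)) : ℝ) : ℂ) * ∫ τ in (0:ℝ)..x.2, (ω.ker τ : ℂ) * ext2 f x.1 τ := rfl

theorem T1_norm (f : AA) : ‖ω.T1 f‖ ≤ 1 / 32 * ‖f‖ := by
  rw [ContinuousMap.norm_le _ (by positivity)]
  exact ω.T1fun_bound f

/-- Swapping the variables. -/
def sw : AA →L[ℂ] AA :=
  LinearMap.mkContinuous
    { toFun := fun f => f.comp (⟨Prod.swap, continuous_swap⟩ : C(KK, KK))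
      map_add' := fun _ _ => rfl
      map_smul' := fun _ _ => rfl } 1 (by
      intro f
      rw [one_mul, ContinuousMap.norm_le _ (by positivity)]
      exact fun x => f.norm_coe_le_norm _)

theorem sw_apply (f : AA) (x : KK) : sw f x = f x.swap := rfl
theorem sw_norm (f : AA) : ‖sw f‖ ≤ ‖f‖ := by
  rw [ContinuousMap.norm_le _ (by positivity)]
  exact fun x => f.norm_coe_le_norm _

/-- The Volterra operator in the first variable. -/
def T2 : AA →L[ℂ] AA := sw ∘L ω.T1 ∘L sw

theorem T2_norm (f : AA) : ‖ω.T2 f‖ ≤ 1 / 32 * ‖f‖ :=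
  (sw_norm _).trans ((ω.T1_norm _).trans (by gcongr; exact sw_norm _))

theorem T2_apply (f : AA) (x : KK) : ω.T2 f x = ω.T1 (sw f) x.swap := rfl

/-- Componentwise operators. -/
def T1v : YY →L[ℂ] YY := ContinuousLinearMap.pi fun i => ω.T1 ∘L ContinuousLinearMap.proj i
def T2v : YY →L[ℂ] YY := ContinuousLinearMap.pi fun i => ω.T2 ∘L ContinuousLinearMap.proj i

theorem T1v_apply (f : YY) (i : Fin 3) : ω.T1v f i = ω.T1 (f i) := rfl
theorem T2v_apply (f : YY) (i : Fin 3) : ω.T2v f i = ω.T2 (f i) := rfl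
theorem T1v_norm (f : YY) : ‖ω.T1v f‖ ≤ 1 / 32 * ‖f‖ := by
  rw [pi_norm_le_iff_of_nonneg (by positivity)]
  exact fun i => (ω.T1_norm _).trans (by gcongr; exact norm_le_pi_norm f i)
theorem T2v_norm (f : YY) : ‖ω.T2v f‖ ≤ 1 / 32 * ‖f‖ := by
  rw [pi_norm_le_iff_of_nonneg (by positivity)]
  exact fun i => (ω.T2_norm _).trans (by gcongr; exact norm_le_pi_norm f i)

end Wt

/-- The smoothness exponent. -/
abbrev inf : WithTop ℕ∞ := ((⊤ : ℕ∞) : WithTop ℕ∞)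

/-- Goursat data. -/
structure GD where
  ω : Wt
  W : Set (ℂ × ℂ)
  e0 : ℝ
  D1 : ℂ → ℂ → VV
  D2 : ℂ → ℂ → VV
  E : ℂ → ℂ → VV
  L1 : ℂ × ℂ → YY
  L2 : ℂ × ℂ → YY
  LE : ℂ × ℂ → YY
  W_open : IsOpen W
  W_star : ∀ x ∈ W, ∀ s ∈ Set.Icc (0:ℝ) 1, ∀ t ∈ Set.Icc (0:ℝ) 1, ((s:ℂ) * x.1, (t:ℂ) * x.2) ∈ W
  W_bd : ∀ x ∈ W, ‖x.1‖ ≤ 2 ∧ ‖x.2‖ ≤ 2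
  L1_smooth : ContDiffOn ℂ inf L1 W
  L2_smooth : ContDiffOn ℂ inf L2 W
  LE_smooth : ContDiffOn ℂ inf LE W
  L1_eq : ∀ x ∈ W, ∀ i (k : KK), L1 x i k = D1 ((k.1 : ℝ) * x.1) ((k.2 : ℝ) * x.2) i
  L2_eq : ∀ x ∈ W, ∀ i (k : KK), L2 x i k = D2 ((k.1 : ℝ) * x.1) ((k.2 : ℝ) * x.2) i
  LE_eq : ∀ x ∈ W, ∀ i (k : KK), LE x i k = E ((k.1 : ℝ) * x.1) ((k.2 : ℝ) * x.2) i
  D1_bd : ∀ x ∈ W, ∀ s ∈ Set.Icc (0:ℝ) 1, ∀ t ∈ Set.Icc (0:ℝ) 1, ∀ i,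
    ‖D1 (s * x.1) (t * x.2) i‖ ≤ ω.a s
  D2_bd : ∀ x ∈ W, ∀ s ∈ Set.Icc (0:ℝ) 1, ∀ t ∈ Set.Icc (0:ℝ) 1, ∀ i,
    ‖D2 (s * x.1) (t * x.2) i‖ ≤ ω.a t
  E_bd : ∀ x ∈ W, ∀ s ∈ Set.Icc (0:ℝ) 1, ∀ t ∈ Set.Icc (0:ℝ) 1, ∀ i,
    ‖E (s * x.1) (t * x.2) i‖ ≤ e0 * (ω.a s * ω.a t)
  e0_pos : 0 < e0
  e0_small : Real.exp (64 * ω.C) * e0 ≤ 1 / 2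
  conj1 : ∀ a b i, star (D1 a b i) = D2 (star b) (star a) i
  conjE : ∀ a b i, star (E a b i) = E (star b) (star a) i

namespace GD
variable (d : GD)

/-- exponential weight -/
def rho (s t : ℝ) : ℝ := Real.exp (32 * (d.ω.A s + d.ω.A t))
/-- weights -/
def w1 (s t : ℝ) : ℝ := d.ω.a s * d.rho s t
def w2 (s t : ℝ) : ℝ := d.ω.a t * d.rho s t

theorem rho_pos (s t : ℝ) : 0 < d.rho s t := Real.exp_pos _
theorem w1_pos (s t : ℝ) : 0 < d.w1 s t := mul_pos (d.ω.a_pos s) (d.rho_pos s t)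
theorem w2_pos (s t : ℝ) : 0 < d.w2 s t := mul_pos (d.ω.a_pos t) (d.rho_pos s t)
theorem rho_mono {s t s' t' : ℝ} (hs : s ≤ s') (ht : t ≤ t') : d.rho s t ≤ d.rho s' t' := by
  unfold rho
  have := d.ω.A_mono hs
  have := d.ω.A_mono ht
  gcongr
theorem w1_mono {s t s' t' : ℝ} (hs : s ≤ s') (ht : t ≤ t') : d.w1 s t ≤ d.w1 s' t' :=
  mul_le_mul (d.ω.a_mono hs) (d.rho_mono hs ht) (d.rho_pos _ _).le (d.ω.a_pos _).le
theorem w2_mono {s t s' t' : ℝ} (hs : s ≤ s') (ht : t ≤ t') : d.w2 s t ≤ d.w2 s' t' :=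
  mul_le_mul (d.ω.a_mono ht) (d.rho_mono hs ht) (d.rho_pos _ _).le (d.ω.a_pos _).le
theorem rho_ge (s t : ℝ) : 1 ≤ d.rho s t := by
  unfold rho
  have := d.ω.A_nonneg s
  have := d.ω.A_nonneg t
  exact Real.one_le_exp (by positivity)
theorem rho_le {s t : ℝ} (hs : s ≤ 1) (ht : t ≤ 1) : d.rho s t ≤ Real.exp (64 * d.ω.C) := by
  unfold rho
  have := d.ω.A_le s hs
  have := d.ω.A_le t ht
  exact Real.exp_le_exp.2 (by linarith)
theorem rho_cont : Continuous fun x : ℝ × ℝ => d.rho x.1 x.2 := by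
  unfold rho; have := d.ω.A_cont; fun_prop
theorem w1_cont : Continuous fun x : ℝ × ℝ => d.w1 x.1 x.2 := by
  unfold w1; have := d.rho_cont; have := d.ω.a_cont; fun_prop
theorem w2_cont : Continuous fun x : ℝ × ℝ => d.w2 x.1 x.2 := by
  unfold w2; have := d.rho_cont; have := d.ω.a_cont; fun_prop
theorem rho_symm (s t : ℝ) : d.rho s t = d.rho t s := by unfold rho; rw [add_comm]
theorem w12 (s t : ℝ) : d.w1 s t = d.w2 t s := by unfold w1 w2; rw [rho_symm]

/-- Coefficient functions. -/
def mkA (f : ℝ × ℝ → ℝ) (hf : Continuous f) : AA :=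
  ⟨fun k => ((f ((k.1:ℝ), (k.2:ℝ)) : ℝ) : ℂ), by fun_prop⟩

def ia1 : AA := mkA (fun x => (d.ω.a x.1)⁻¹)
  ((d.ω.a_cont.comp continuous_fst).inv₀ fun x => (d.ω.a_pos _).ne')
def ia2 : AA := mkA (fun x => (d.ω.a x.2)⁻¹)
  ((d.ω.a_cont.comp continuous_snd).inv₀ fun x => (d.ω.a_pos _).ne')
def iE : AA := mkA (fun x => (d.ω.a x.1 * d.ω.a x.2 * d.rho x.1 x.2)⁻¹)
  ((((d.ω.a_cont.comp continuous_fst).mul (d.ω.a_cont.comp continuous_snd)).mul d.rho_cont).inv₀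
    fun x => (mul_pos (mul_pos (d.ω.a_pos _) (d.ω.a_pos _)) (d.rho_pos _ _)).ne')
def rh : AA := mkA (fun x => d.rho x.1 x.2) d.rho_cont

def U1 (x : ℂ × ℂ) : YY := fun i => d.ia1 * d.L1 x i
def U2 (x : ℂ × ℂ) : YY := fun i => d.ia2 * d.L2 x i
def UE (x : ℂ × ℂ) : YY := fun i => d.iE * d.LE x i

theorem U1_apply (x : ℂ × ℂ) (hx : x ∈ d.W) (i) (k : KK) :
    d.U1 x i k = ((d.ω.a k.1 : ℝ) : ℂ)⁻¹ * d.D1 ((k.1 : ℝ) * x.1) ((k.2 : ℝ) * x.2) i := by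
  rw [← d.L1_eq x hx]; simp [U1, ia1, mkA]
theorem U2_apply (x : ℂ × ℂ) (hx : x ∈ d.W) (i) (k : KK) :
    d.U2 x i k = ((d.ω.a k.2 : ℝ) : ℂ)⁻¹ * d.D2 ((k.1 : ℝ) * x.1) ((k.2 : ℝ) * x.2) i := by
  rw [← d.L2_eq x hx]; simp [U2, ia2, mkA]
theorem UE_apply (x : ℂ × ℂ) (hx : x ∈ d.W) (i) (k : KK) :
    d.UE x i k = ((d.ω.a k.1 * d.ω.a k.2 * d.rho k.1 k.2 : ℝ) : ℂ)⁻¹ *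
      d.E ((k.1 : ℝ) * x.1) ((k.2 : ℝ) * x.2) i := by
  rw [← d.LE_eq x hx]; simp [UE, iE, mkA]

theorem U1_norm (x : ℂ × ℂ) (hx : x ∈ d.W) : ‖d.U1 x‖ ≤ 1 := by
  rw [pi_norm_le_iff_of_nonneg zero_le_one]
  intro i
  rw [ContinuousMap.norm_le _ zero_le_one]
  intro k
  rw [d.U1_apply x hx, norm_mul, norm_inv, Complex.norm_real,
    Real.norm_of_nonneg (d.ω.a_pos _).le, inv_mul_le_iff₀ (d.ω.a_pos _), mul_one]
  exact d.D1_bd x hx _ k.1.2 _ k.2.2 i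
theorem U2_norm (x : ℂ × ℂ) (hx : x ∈ d.W) : ‖d.U2 x‖ ≤ 1 := by
  rw [pi_norm_le_iff_of_nonneg zero_le_one]
  intro i
  rw [ContinuousMap.norm_le _ zero_le_one]
  intro k
  rw [d.U2_apply x hx, norm_mul, norm_inv, Complex.norm_real,
    Real.norm_of_nonneg (d.ω.a_pos _).le, inv_mul_le_iff₀ (d.ω.a_pos _), mul_one]
  exact d.D2_bd x hx _ k.1.2 _ k.2.2 i
theorem UE_norm (x : ℂ × ℂ) (hx : x ∈ d.W) : ‖d.UE x‖ ≤ d.e0 := by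
  have he := d.e0_pos
  rw [pi_norm_le_iff_of_nonneg he.le]
  intro i
  rw [ContinuousMap.norm_le _ he.le]
  intro k
  have h1 := mul_pos (d.ω.a_pos k.1) (d.ω.a_pos k.2)
  have h2 := mul_pos h1 (d.rho_pos k.1 k.2)
  rw [d.UE_apply x hx, norm_mul, norm_inv, Complex.norm_real,
    Real.norm_of_nonneg h2.le, inv_mul_le_iff₀ h2]
  refine (d.E_bd x hx _ k.1.2 _ k.2.2 i).trans ?_
  nlinarith [d.rho_ge k.1 k.2, mul_pos he h1]

theorem rh_norm : ‖d.rh‖ ≤ Real.exp (64 * d.ω.C) := by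
  rw [ContinuousMap.norm_le _ (Real.exp_pos _).le]
  intro k
  have : d.rh k = ((d.rho k.1 k.2 : ℝ) : ℂ) := rfl
  rw [this, Complex.norm_real, Real.norm_of_nonneg (d.rho_pos _ _).le]
  exact d.rho_le k.1.2.2 k.2.2.2

/-- Componentwise multiplication. -/
def rsm (c : AA) (f : YY) : YY := fun i => c * f i
theorem rsm_norm (c : AA) (f : YY) : ‖rsm c f‖ ≤ ‖c‖ * ‖f‖ := by
  rw [pi_norm_le_iff_of_nonneg (by positivity)]
  exact fun i => (norm_mul_le _ _).trans (by gcongr; exact norm_le_pi_norm f i)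

/-- The nonlinearity. -/
def Gam (x : ℂ × ℂ) (X : YY × YY) : YY :=
  d.UE x + bt (d.U1 x) X.2 + bt X.1 (d.U2 x) + rsm d.rh (bt X.1 X.2)

/-- The fixed point map. -/
def Phi (y : (ℂ × ℂ) × (YY × YY)) : YY × YY :=
  (y.1.2 • d.ω.T1v (d.Gam y.1 y.2), y.1.1 • d.ω.T2v (d.Gam y.1 y.2))

end GD

theorem bt_smooth {Ev : Type*} [NormedAddCommGroup Ev] [NormedSpace ℂ Ev] {f g : Ev → YY} {x : Ev}
    {n : WithTop ℕ∞}
    (hf : ContDiffAt ℂ n f x) (hg : ContDiffAt ℂ n g x) :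
    ContDiffAt ℂ n (fun x => bt (f x) (g x)) x := by
  rw [contDiffAt_pi] at hf hg ⊢
  intro i
  exact ((((hf _).mul (hg _)).sub ((hf _).mul (hg _))).const_smul _)

namespace GD
variable (d : GD)

theorem U_smooth (c : AA) (L : ℂ × ℂ → YY) (h : ContDiffOn ℂ inf L d.W) (x) (hx : x ∈ d.W) :
    ContDiffAt ℂ inf (fun x => (fun i => c * L x i : YY)) x := by
  have := h.contDiffAt (d.W_open.mem_nhds hx)
  rw [contDiffAt_pi] at this ⊢
  exact fun i => contDiffAt_const.mul (this i)

theorem Phi_smooth (x) (hx : x ∈ d.W) (X : YY × YY) : ContDiffAt ℂ inf d.Phi (x, X) := by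
  have h1 : ContDiffAt ℂ inf (fun y : (ℂ × ℂ) × (YY × YY) => d.U1 y.1) (x, X) :=
    (d.U_smooth _ _ d.L1_smooth x hx).comp (x, X) contDiffAt_fst
  have h2 : ContDiffAt ℂ inf (fun y : (ℂ × ℂ) × (YY × YY) => d.U2 y.1) (x, X) :=
    (d.U_smooth _ _ d.L2_smooth x hx).comp (x, X) contDiffAt_fst
  have h3 : ContDiffAt ℂ inf (fun y : (ℂ × ℂ) × (YY × YY) => d.UE y.1) (x, X) :=
    (d.U_smooth _ _ d.LE_smooth x hx).comp (x, X) contDiffAt_fst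
  have hP : ContDiffAt ℂ inf (fun y : (ℂ × ℂ) × (YY × YY) => y.2.1) (x, X) := by fun_prop
  have hQ : ContDiffAt ℂ inf (fun y : (ℂ × ℂ) × (YY × YY) => y.2.2) (x, X) := by fun_prop
  have h4 : ContDiffAt ℂ inf (fun y : (ℂ × ℂ) × (YY × YY) => rsm d.rh (bt y.2.1 y.2.2)) (x, X) := by
    have := bt_smooth hP hQ
    rw [contDiffAt_pi] at this ⊢
    exact fun i => contDiffAt_const.mul (this i)
  have hG : ContDiffAt ℂ inf (fun y : (ℂ × ℂ) × (YY × YY) => d.Gam y.1 y.2) (x, X) :=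
    ((h3.add (bt_smooth h1 hQ)).add (bt_smooth hP h2)).add h4
  have a1 : ContDiffAt ℂ inf (fun y : (ℂ × ℂ) × (YY × YY) => y.1.1) (x, X) := by fun_prop
  have a2 : ContDiffAt ℂ inf (fun y : (ℂ × ℂ) × (YY × YY) => y.1.2) (x, X) := by fun_prop
  exact (a2.smul (d.ω.T1v.contDiff.contDiffAt.comp _ hG)).prodMk
    (a1.smul (d.ω.T2v.contDiff.contDiffAt.comp _ hG))

theorem Gam_lip (x) (hx : x ∈ d.W) (X Y : YY × YY) (hX : ‖X‖ < 2 * d.e0) (hY : ‖Y‖ < 2 * d.e0) :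
    ‖d.Gam x X - d.Gam x Y‖ ≤ 8 * ‖X - Y‖ := by
  have e : d.Gam x X - d.Gam x Y = bt (d.U1 x) (X - Y).2 + bt (X - Y).1 (d.U2 x) +
      rsm d.rh (bt X.1 (X - Y).2 + bt (X - Y).1 Y.2) := by
    simp only [Gam, Prod.fst_sub, Prod.snd_sub, bt_sub_left, bt_sub_right]
    funext i; simp only [rsm, Pi.add_apply, Pi.sub_apply]; ring
  have n1 : ‖(X - Y).1‖ ≤ ‖X - Y‖ := norm_fst_le _
  have n2 : ‖(X - Y).2‖ ≤ ‖X - Y‖ := norm_snd_le _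
  have n3 : ‖X.1‖ ≤ 2 * d.e0 := (norm_fst_le _).trans hX.le
  have n4 : ‖Y.2‖ ≤ 2 * d.e0 := (norm_snd_le _).trans hY.le
  have he := d.e0_pos
  set D := ‖X - Y‖ with hD
  have hD0 : 0 ≤ D := norm_nonneg _
  have b1 : ‖bt (d.U1 x) (X - Y).2‖ ≤ 2 * 1 * D :=
    (bt_norm _ _).trans (by have := d.U1_norm x hx; gcongr)
  have b2 : ‖bt (X - Y).1 (d.U2 x)‖ ≤ 2 * D * 1 :=
    (bt_norm _ _).trans (by have := d.U2_norm x hx; gcongr)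
  have b3 : ‖bt X.1 (X - Y).2‖ ≤ 2 * (2 * d.e0) * D := (bt_norm _ _).trans (by gcongr)
  have b4 : ‖bt (X - Y).1 Y.2‖ ≤ 2 * D * (2 * d.e0) := (bt_norm _ _).trans (by gcongr)
  have b5 : ‖rsm d.rh (bt X.1 (X - Y).2 + bt (X - Y).1 Y.2)‖ ≤
      Real.exp (64 * d.ω.C) * (2 * (2 * d.e0) * D + 2 * D * (2 * d.e0)) := by
    refine (rsm_norm _ _).trans ?_
    exact mul_le_mul d.rh_norm ((norm_add_le _ _).trans (add_le_add b3 b4)) (norm_nonneg _)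
      (Real.exp_pos _).le
  rw [e]
  refine (norm_add₃_le).trans ?_
  nlinarith [d.e0_small]

theorem Phi_lip (x) (hx : x ∈ d.W) (X Y : YY × YY) (hX : ‖X‖ < 2 * d.e0) (hY : ‖Y‖ < 2 * d.e0) :
    ‖d.Phi (x, X) - d.Phi (x, Y)‖ ≤ 1 / 2 * ‖X - Y‖ := by
  have h := d.Gam_lip x hx X Y hX hY
  obtain ⟨hz, hw⟩ := d.W_bd x hx
  rw [Prod.norm_def, max_le_iff]
  constructor
  · have e : (d.Phi (x, X) - d.Phi (x, Y)).1 = x.2 • d.ω.T1v (d.Gam x X - d.Gam x Y) := by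
      rw [map_sub, smul_sub]; rfl
    rw [e, norm_smul]
    have h2 := d.ω.T1v_norm (d.Gam x X - d.Gam x Y)
    nlinarith [norm_nonneg x.2, norm_nonneg (d.ω.T1v (d.Gam x X - d.Gam x Y)), norm_nonneg (X-Y)]
  · have e : (d.Phi (x, X) - d.Phi (x, Y)).2 = x.1 • d.ω.T2v (d.Gam x X - d.Gam x Y) := by
      rw [map_sub, smul_sub]; rfl
    rw [e, norm_smul]
    have h2 := d.ω.T2v_norm (d.Gam x X - d.Gam x Y)
    nlinarith [norm_nonneg x.1, norm_nonneg (d.ω.T2v (d.Gam x X - d.Gam x Y)), norm_nonneg (X-Y)]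

theorem Phi_zero (x) (hx : x ∈ d.W) : ‖d.Phi (x, 0)‖ ≤ d.e0 / 2 := by
  have e : d.Gam x 0 = d.UE x := by
    funext i; simp [Gam, bt_zero_left, bt_zero_right, rsm]
  have h := d.UE_norm x hx
  have he := d.e0_pos
  obtain ⟨hz, hw⟩ := d.W_bd x hx
  rw [Prod.norm_def, max_le_iff]
  constructor
  · simp only [Phi, e]
    rw [norm_smul]
    have h2 := d.ω.T1v_norm (d.UE x)
    nlinarith [norm_nonneg x.2, norm_nonneg (d.ω.T1v (d.UE x))]
  · simp only [Phi, e]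
    rw [norm_smul]
    have h2 := d.ω.T2v_norm (d.UE x)
    nlinarith [norm_nonneg x.1, norm_nonneg (d.ω.T2v (d.UE x))]

theorem exists_fp : ∃ X : ℂ × ℂ → YY × YY, ContDiffOn ℂ inf X d.W ∧
    ∀ x ∈ d.W, ‖X x‖ ≤ d.e0 ∧ d.Phi (x, X x) = X x :=
  fp_smooth d.W d.W_open d.Phi d.e0 d.e0_pos inf (by simp) d.Phi_smooth d.Phi_lip d.Phi_zero

/-- The fixed point. -/
def X : ℂ × ℂ → YY × YY := d.exists_fp.choose
theorem X_smooth : ContDiffOn ℂ inf d.X d.W := d.exists_fp.choose_spec.1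
theorem X_norm (x) (hx : x ∈ d.W) : ‖d.X x‖ ≤ d.e0 := (d.exists_fp.choose_spec.2 x hx).1
theorem X_fp (x) (hx : x ∈ d.W) : d.Phi (x, d.X x) = d.X x := (d.exists_fp.choose_spec.2 x hx).2

theorem X_unique (x) (hx : x ∈ d.W) (Y : YY × YY) (hY : ‖Y‖ ≤ d.e0) (h : d.Phi (x, Y) = Y) :
    Y = d.X x := by
  have he := d.e0_pos
  have := d.Phi_lip x hx Y (d.X x) (by linarith) (by linarith [d.X_norm x hx])
  rw [h, d.X_fp x hx] at this
  have h0 : ‖Y - d.X x‖ ≤ 0 := by linarith [norm_nonneg (Y - d.X x)]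
  exact sub_eq_zero.1 (norm_le_zero_iff.1 h0)

end GD

/-- Projection to the unit interval. -/
def pj (s : ℝ) : unitInterval := Set.projIcc 0 1 zero_le_one s
theorem pj_coe {s : ℝ} (hs : s ∈ Set.Icc (0:ℝ) 1) : ((pj s : unitInterval) : ℝ) = s := by
  unfold pj; rw [Set.projIcc_of_mem _ hs]
theorem pj_self (s : unitInterval) : pj (s : ℝ) = s := Set.projIcc_val _ s
theorem pj_cont : Continuous pj := by unfold pj; exact continuous_projIcc

namespace GD
variable (d : GD)

def pP (X : YY × YY) (s t : ℝ) : VV := fun i => (d.w1 s t : ℂ) * X.1 i (pj s, pj t)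
def qQ (X : YY × YY) (s t : ℝ) : VV := fun i => (d.w2 s t : ℂ) * X.2 i (pj s, pj t)
def Gx (x : ℂ × ℂ) (X : YY × YY) (s t : ℝ) : VV :=
  d.E (s * x.1) (t * x.2) + bt (d.D1 (s * x.1) (t * x.2)) (d.qQ X s t) +
    bt (d.pP X s t) (d.D2 (s * x.1) (t * x.2)) + bt (d.pP X s t) (d.qQ X s t)

theorem Gx_eq (x) (hx : x ∈ d.W) (X : YY × YY) {s t : ℝ} (hs : s ∈ Set.Icc (0:ℝ) 1)
    (ht : t ∈ Set.Icc (0:ℝ) 1) (i) :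
    d.Gx x X s t i = ((d.ω.a s * d.ω.a t * d.rho s t : ℝ) : ℂ) * d.Gam x X i (pj s, pj t) := by
  have h1 : ((d.ω.a s : ℝ) : ℂ) ≠ 0 := by exact_mod_cast (d.ω.a_pos s).ne'
  have h2 : ((d.ω.a t : ℝ) : ℂ) ≠ 0 := by exact_mod_cast (d.ω.a_pos t).ne'
  have h3 : ((d.rho s t : ℝ) : ℂ) ≠ 0 := by exact_mod_cast (d.rho_pos s t).ne'
  have hr : d.rh (pj s, pj t) = ((d.rho s t : ℝ) : ℂ) := by
    simp [rh, mkA, pj_coe hs, pj_coe ht]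
  simp only [Gx, Gam, bt, rsm, pP, qQ, w1, w2, Pi.add_apply, ContinuousMap.add_apply,
    ContinuousMap.smul_apply, ContinuousMap.mul_apply, ContinuousMap.sub_apply, d.U1_apply x hx,
    d.U2_apply x hx, d.UE_apply x hx, pj_coe hs, pj_coe ht, hr, smul_eq_mul]
  push_cast
  field_simp

theorem Phi1 (x) (hx : x ∈ d.W) (X : YY × YY) {s t : ℝ} (hs : s ∈ Set.Icc (0:ℝ) 1)
    (ht : t ∈ Set.Icc (0:ℝ) 1) (i) :
    d.pP (d.Phi (x, X)) s t i = x.2 * ∫ τ in (0:ℝ)..t, d.Gx x X s τ i := by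
  have e : (d.Phi (x, X)).1 i (pj s, pj t) = x.2 * d.ω.T1 (d.Gam x X i) (pj s, pj t) := rfl
  rw [pP, e, Wt.T1_apply]
  simp only [pj_coe ht]
  have : ∫ τ in (0:ℝ)..t, d.Gx x X s τ i = ∫ τ in (0:ℝ)..t,
      ((d.ω.a s * Real.exp (32 * d.ω.A s) : ℝ) : ℂ) *
      ((d.ω.ker τ : ℂ) * Wt.ext2 (d.Gam x X i) (pj s) τ) := by
    refine intervalIntegral.integral_congr fun τ hτ => ?_
    rw [Set.uIcc_of_le ht.1] at hτ
    simp only [d.Gx_eq x hx X hs ⟨hτ.1, hτ.2.trans ht.2⟩ i]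
    rw [← mul_assoc]
    congr 1
    rw [← Complex.ofReal_mul, Wt.ker, rho, mul_add, Real.exp_add]
    congr 1; ring
  rw [this, intervalIntegral.integral_const_mul, w1, rho, mul_add, Real.exp_add]
  have h2 : (Real.exp (32 * d.ω.A t) : ℂ) * (Real.exp (-(32 * d.ω.A t)) : ℂ) = 1 := by
    rw [← Complex.ofReal_mul, ← Real.exp_add]; simp
  push_cast at h2 ⊢
  linear_combination (Complex.ofReal (d.ω.a s) * Complex.exp (32 * (d.ω.A s : ℂ)) * x.2 *
    ∫ τ in (0:ℝ)..t, ((d.ω.ker τ : ℂ) * Wt.ext2 (d.Gam x X i) (pj s) τ)) * h2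

theorem Phi2 (x) (hx : x ∈ d.W) (X : YY × YY) {s t : ℝ} (hs : s ∈ Set.Icc (0:ℝ) 1)
    (ht : t ∈ Set.Icc (0:ℝ) 1) (i) :
    d.qQ (d.Phi (x, X)) s t i = x.1 * ∫ τ in (0:ℝ)..s, d.Gx x X τ t i := by
  have e : (d.Phi (x, X)).2 i (pj s, pj t) = x.1 * d.ω.T2 (d.Gam x X i) (pj s, pj t) := rfl
  rw [qQ, e, Wt.T2_apply, Wt.T1_apply]
  simp only [pj_coe hs, Prod.snd_swap, Prod.fst_swap]
  have : ∫ τ in (0:ℝ)..s, d.Gx x X τ t i = ∫ τ in (0:ℝ)..s,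
      ((d.ω.a t * Real.exp (32 * d.ω.A t) : ℝ) : ℂ) *
      ((d.ω.ker τ : ℂ) * Wt.ext2 (Wt.sw (d.Gam x X i)) (pj t) τ) := by
    refine intervalIntegral.integral_congr fun τ hτ => ?_
    rw [Set.uIcc_of_le hs.1] at hτ
    simp only [d.Gx_eq x hx X ⟨hτ.1, hτ.2.trans hs.2⟩ ht i]
    rw [← mul_assoc]
    have : Wt.ext2 (Wt.sw (d.Gam x X i)) (pj t) τ = d.Gam x X i (pj τ, pj t) := rfl
    rw [this]
    congr 1
    rw [← Complex.ofReal_mul, Wt.ker, rho, mul_add, Real.exp_add]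
    congr 1; ring
  rw [this, intervalIntegral.integral_const_mul, w2, rho, mul_add, Real.exp_add]
  have h2 : (Real.exp (32 * d.ω.A s) : ℂ) * (Real.exp (-(32 * d.ω.A s)) : ℂ) = 1 := by
    rw [← Complex.ofReal_mul, ← Real.exp_add]; simp
  push_cast at h2 ⊢
  linear_combination (Complex.ofReal (d.ω.a t) * Complex.exp (32 * (d.ω.A t : ℂ)) * x.1 *
    ∫ τ in (0:ℝ)..s, ((d.ω.ker τ : ℂ) * Wt.ext2 (Wt.sw (d.Gam x X i)) (pj t) τ)) * h2

theorem pP_inj (X Y : YY × YY)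
    (h1 : ∀ s ∈ Set.Icc (0:ℝ) 1, ∀ t ∈ Set.Icc (0:ℝ) 1, ∀ i, d.pP X s t i = d.pP Y s t i)
    (h2 : ∀ s ∈ Set.Icc (0:ℝ) 1, ∀ t ∈ Set.Icc (0:ℝ) 1, ∀ i, d.qQ X s t i = d.qQ Y s t i) :
    X = Y := by
  have g1 : ∀ s t, (d.w1 s t : ℂ) ≠ 0 := fun s t => by exact_mod_cast (d.w1_pos s t).ne'
  have g2 : ∀ s t, (d.w2 s t : ℂ) ≠ 0 := fun s t => by exact_mod_cast (d.w2_pos s t).ne'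
  refine Prod.ext ?_ ?_
  · funext i; ext k
    have := h1 k.1 k.1.2 k.2 k.2.2 i
    simpa [pP, g1, pj_self] using this
  · funext i; ext k
    have := h2 k.1 k.1.2 k.2 k.2.2 i
    simpa [qQ, g2, pj_self] using this

theorem eq_X (x) (hx : x ∈ d.W) (Y : YY × YY) (hY : ‖Y‖ ≤ d.e0)
    (h1 : ∀ s ∈ Set.Icc (0:ℝ) 1, ∀ t ∈ Set.Icc (0:ℝ) 1, ∀ i,
      d.pP Y s t i = x.2 * ∫ τ in (0:ℝ)..t, d.Gx x Y s τ i)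
    (h2 : ∀ s ∈ Set.Icc (0:ℝ) 1, ∀ t ∈ Set.Icc (0:ℝ) 1, ∀ i,
      d.qQ Y s t i = x.1 * ∫ τ in (0:ℝ)..s, d.Gx x Y τ t i) : Y = d.X x := by
  refine d.X_unique x hx Y hY (d.pP_inj _ _ ?_ ?_)
  · intro s hs t ht i; rw [d.Phi1 x hx Y hs ht, h1 s hs t ht i]
  · intro s hs t ht i; rw [d.Phi2 x hx Y hs ht, h2 s hs t ht i]

theorem X1 (x) (hx : x ∈ d.W) {s t : ℝ} (hs : s ∈ Set.Icc (0:ℝ) 1)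
    (ht : t ∈ Set.Icc (0:ℝ) 1) (i) :
    d.pP (d.X x) s t i = x.2 * ∫ τ in (0:ℝ)..t, d.Gx x (d.X x) s τ i := by
  rw [← d.Phi1 x hx _ hs ht, d.X_fp x hx]
theorem X2 (x) (hx : x ∈ d.W) {s t : ℝ} (hs : s ∈ Set.Icc (0:ℝ) 1)
    (ht : t ∈ Set.Icc (0:ℝ) 1) (i) :
    d.qQ (d.X x) s t i = x.1 * ∫ τ in (0:ℝ)..s, d.Gx x (d.X x) τ t i := by
  rw [← d.Phi2 x hx _ hs ht, d.X_fp x hx]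

theorem mulI {s t : ℝ} (hs : s ∈ Set.Icc (0:ℝ) 1) (ht : t ∈ Set.Icc (0:ℝ) 1) :
    s * t ∈ Set.Icc (0:ℝ) 1 := ⟨mul_nonneg hs.1 ht.1, mul_le_one₀ hs.2 ht.1 ht.2⟩

/-- A general way of building a candidate. -/
def cand (p q : Fin 3 → KK → ℂ) (hp : ∀ i, Continuous (p i)) (hq : ∀ i, Continuous (q i)) :
    YY × YY := (fun i => ⟨p i, hp i⟩, fun i => ⟨q i, hq i⟩)

theorem scale (x) (hx : x ∈ d.W) {σ τ : ℝ} (hσ : σ ∈ Set.Icc (0:ℝ) 1) (hτ : τ ∈ Set.Icc (0:ℝ) 1)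
    {s t : ℝ} (hs : s ∈ Set.Icc (0:ℝ) 1) (ht : t ∈ Set.Icc (0:ℝ) 1) :
    d.pP (d.X ((σ:ℂ) * x.1, (τ:ℂ) * x.2)) s t = d.pP (d.X x) (σ * s) (τ * t) ∧
    d.qQ (d.X ((σ:ℂ) * x.1, (τ:ℂ) * x.2)) s t = d.qQ (d.X x) (σ * s) (τ * t) := by
  have hc1 := d.w1_cont
  have hc2 := d.w2_cont
  have hm : Continuous fun k : KK => ((pj (σ * k.1), pj (τ * k.2)) : KK) :=
    (pj_cont.comp (by fun_prop)).prodMk (pj_cont.comp (by fun_prop))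
  have hw1 : Continuous fun k : KK => (((d.w1 (σ * k.1) (τ * k.2) / d.w1 k.1 k.2 : ℝ)) : ℂ) := by
    refine Complex.continuous_ofReal.comp (Continuous.div ?_ ?_ fun k => (d.w1_pos _ _).ne')
    · exact hc1.comp (by fun_prop : Continuous fun k : KK => (σ * (k.1:ℝ), τ * (k.2:ℝ)))
    · exact hc1.comp (by fun_prop : Continuous fun k : KK => ((k.1:ℝ), (k.2:ℝ)))
  have hw2 : Continuous fun k : KK => (((d.w2 (σ * k.1) (τ * k.2) / d.w2 k.1 k.2 : ℝ)) : ℂ) := by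
    refine Complex.continuous_ofReal.comp (Continuous.div ?_ ?_ fun k => (d.w2_pos _ _).ne')
    · exact hc2.comp (by fun_prop : Continuous fun k : KK => (σ * (k.1:ℝ), τ * (k.2:ℝ)))
    · exact hc2.comp (by fun_prop : Continuous fun k : KK => ((k.1:ℝ), (k.2:ℝ)))
  set Y : YY × YY := cand
    (fun i k => (((d.w1 (σ * k.1) (τ * k.2) / d.w1 k.1 k.2 : ℝ)) : ℂ) *
      (d.X x).1 i (pj (σ * k.1), pj (τ * k.2)))
    (fun i k => (((d.w2 (σ * k.1) (τ * k.2) / d.w2 k.1 k.2 : ℝ)) : ℂ) *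
      (d.X x).2 i (pj (σ * k.1), pj (τ * k.2)))
    (fun i => hw1.mul (((d.X x).1 i).continuous.comp hm))
    (fun i => hw2.mul (((d.X x).2 i).continuous.comp hm)) with hY
  have he := d.e0_pos
  have hXn := d.X_norm x hx
  have hYn : ‖Y‖ ≤ d.e0 := by
    rw [Prod.norm_def, max_le_iff]
    constructor
    · rw [pi_norm_le_iff_of_nonneg he.le]
      intro i
      rw [ContinuousMap.norm_le _ he.le]
      intro k
      have : Y.1 i k = (((d.w1 (σ * k.1) (τ * k.2) / d.w1 k.1 k.2 : ℝ)) : ℂ) *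
        (d.X x).1 i (pj (σ * k.1), pj (τ * k.2)) := rfl
      have hq : d.w1 (σ * k.1) (τ * k.2) / d.w1 k.1 k.2 ≤ 1 := by
        rw [div_le_one (d.w1_pos _ _)]
        exact d.w1_mono (mul_le_of_le_one_left k.1.2.1 hσ.2) (mul_le_of_le_one_left k.2.2.1 hτ.2)
      rw [this, norm_mul, Complex.norm_real,
        Real.norm_of_nonneg (div_pos (d.w1_pos _ _) (d.w1_pos _ _)).le]
      refine (mul_le_of_le_one_left (norm_nonneg _) hq).trans ?_
      exact (((d.X x).1 i).norm_coe_le_norm _).trans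
        ((norm_le_pi_norm _ i).trans ((norm_fst_le _).trans hXn))
    · rw [pi_norm_le_iff_of_nonneg he.le]
      intro i
      rw [ContinuousMap.norm_le _ he.le]
      intro k
      have : Y.2 i k = (((d.w2 (σ * k.1) (τ * k.2) / d.w2 k.1 k.2 : ℝ)) : ℂ) *
        (d.X x).2 i (pj (σ * k.1), pj (τ * k.2)) := rfl
      have hq : d.w2 (σ * k.1) (τ * k.2) / d.w2 k.1 k.2 ≤ 1 := by
        rw [div_le_one (d.w2_pos _ _)]
        exact d.w2_mono (mul_le_of_le_one_left k.1.2.1 hσ.2) (mul_le_of_le_one_left k.2.2.1 hτ.2)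
      rw [this, norm_mul, Complex.norm_real,
        Real.norm_of_nonneg (div_pos (d.w2_pos _ _) (d.w2_pos _ _)).le]
      refine (mul_le_of_le_one_left (norm_nonneg _) hq).trans ?_
      exact (((d.X x).2 i).norm_coe_le_norm _).trans
        ((norm_le_pi_norm _ i).trans ((norm_snd_le _).trans hXn))
  have e1 : ∀ s ∈ Set.Icc (0:ℝ) 1, ∀ t ∈ Set.Icc (0:ℝ) 1,
      d.pP Y s t = d.pP (d.X x) (σ * s) (τ * t) := by
    intro s hs t ht
    funext i
    have g1 : (d.w1 s t : ℂ) ≠ 0 := by exact_mod_cast (d.w1_pos s t).ne'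
    have : d.pP Y s t i = (d.w1 s t : ℂ) *
      ((((d.w1 (σ * (pj s : ℝ)) (τ * (pj t : ℝ)) / d.w1 (pj s) (pj t) : ℝ)) : ℂ) *
        (d.X x).1 i (pj (σ * (pj s : ℝ)), pj (τ * (pj t : ℝ)))) := rfl
    rw [this, pj_coe hs, pj_coe ht, pP]
    push_cast; field_simp
  have e2 : ∀ s ∈ Set.Icc (0:ℝ) 1, ∀ t ∈ Set.Icc (0:ℝ) 1,
      d.qQ Y s t = d.qQ (d.X x) (σ * s) (τ * t) := by
    intro s hs t ht
    funext i
    have g1 : (d.w2 s t : ℂ) ≠ 0 := by exact_mod_cast (d.w2_pos s t).ne'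
    have : d.qQ Y s t i = (d.w2 s t : ℂ) *
      ((((d.w2 (σ * (pj s : ℝ)) (τ * (pj t : ℝ)) / d.w2 (pj s) (pj t) : ℝ)) : ℂ) *
        (d.X x).2 i (pj (σ * (pj s : ℝ)), pj (τ * (pj t : ℝ)))) := rfl
    rw [this, pj_coe hs, pj_coe ht, qQ]
    push_cast; field_simp
  have e3 : ∀ s ∈ Set.Icc (0:ℝ) 1, ∀ t ∈ Set.Icc (0:ℝ) 1,
      d.Gx ((σ:ℂ) * x.1, (τ:ℂ) * x.2) Y s t = d.Gx x (d.X x) (σ * s) (τ * t) := by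
    intro s hs t ht
    have a1 : (s:ℂ) * ((σ:ℂ) * x.1) = ((σ * s : ℝ) : ℂ) * x.1 := by push_cast; ring
    have a2 : (t:ℂ) * ((τ:ℂ) * x.2) = ((τ * t : ℝ) : ℂ) * x.2 := by push_cast; ring
    simp only [Gx, e1 s hs t ht, e2 s hs t ht, a1, a2]
  have hx' := d.W_star x hx σ hσ τ hτ
  have key : Y = d.X ((σ:ℂ) * x.1, (τ:ℂ) * x.2) := by
    refine d.eq_X _ hx' Y hYn ?_ ?_
    · intro s hs t ht i
      rw [e1 s hs t ht, d.X1 x hx (mulI hσ hs) (mulI hτ ht) i]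
      have := intervalIntegral.smul_integral_comp_mul_left (a := 0) (b := t)
        (fun y => d.Gx x (d.X x) (σ * s) y i) τ
      rw [mul_zero] at this
      rw [← this]
      have : ∫ y in (0:ℝ)..t, d.Gx ((σ:ℂ) * x.1, (τ:ℂ) * x.2) Y s y i =
          ∫ y in (0:ℝ)..t, d.Gx x (d.X x) (σ * s) (τ * y) i := by
        refine intervalIntegral.integral_congr fun y hy => ?_
        rw [Set.uIcc_of_le ht.1] at hy
        simp only [e3 s hs y ⟨hy.1, hy.2.trans ht.2⟩]
      rw [this, Complex.real_smul]; ring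
    · intro s hs t ht i
      rw [e2 s hs t ht, d.X2 x hx (mulI hσ hs) (mulI hτ ht) i]
      have := intervalIntegral.smul_integral_comp_mul_left (a := 0) (b := s)
        (fun y => d.Gx x (d.X x) y (τ * t) i) σ
      rw [mul_zero] at this
      rw [← this]
      have : ∫ y in (0:ℝ)..s, d.Gx ((σ:ℂ) * x.1, (τ:ℂ) * x.2) Y y t i =
          ∫ y in (0:ℝ)..s, d.Gx x (d.X x) (σ * y) (τ * t) i := by
        refine intervalIntegral.integral_congr fun y hy => ?_
        rw [Set.uIcc_of_le hs.1] at hy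
        simp only [e3 y ⟨hy.1, hy.2.trans hs.2⟩ t ht]
      rw [this, Complex.real_smul]; ring
  rw [← key]
  exact ⟨e1 s hs t ht, e2 s hs t ht⟩

theorem bt_star (x y : VV) (i) : star (bt x y i) = bt (fun i => star (y i)) (fun i => star (x i)) i := by
  simp only [bt, smul_eq_mul, star_mul', star_sub, star_neg]
  have : star Complex.I = -Complex.I := Complex.conj_I
  rw [this]; ring

theorem ii_star (f : ℝ → ℂ) (a b : ℝ) : ∫ τ in a..b, star (f τ) = star (∫ τ in a..b, f τ) := by
  rw [intervalIntegral, intervalIntegral, star_sub]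
  exact congrArg₂ _ integral_conj integral_conj

theorem conj_sym (z : ℂ) (hx : (z, star z) ∈ d.W) {s t : ℝ} (hs : s ∈ Set.Icc (0:ℝ) 1)
    (ht : t ∈ Set.Icc (0:ℝ) 1) (i) :
    d.pP (d.X (z, star z)) s t i = star (d.qQ (d.X (z, star z)) t s i) := by
  set x : ℂ × ℂ := (z, star z) with hxdef
  have hm : Continuous fun k : KK => k.swap := continuous_swap
  set Y : YY × YY := cand (fun i k => star ((d.X x).2 i k.swap)) (fun i k => star ((d.X x).1 i k.swap))
    (fun i => continuous_star.comp (((d.X x).2 i).continuous.comp hm))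
    (fun i => continuous_star.comp (((d.X x).1 i).continuous.comp hm)) with hY
  have he := d.e0_pos
  have hXn := d.X_norm x hx
  have hYn : ‖Y‖ ≤ d.e0 := by
    rw [Prod.norm_def, max_le_iff]
    constructor
    · rw [pi_norm_le_iff_of_nonneg he.le]
      intro i
      rw [ContinuousMap.norm_le _ he.le]
      intro k
      have : Y.1 i k = star ((d.X x).2 i k.swap) := rfl
      rw [this, norm_star]
      exact (((d.X x).2 i).norm_coe_le_norm _).trans
        ((norm_le_pi_norm _ i).trans ((norm_snd_le _).trans hXn))
    · rw [pi_norm_le_iff_of_nonneg he.le]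
      intro i
      rw [ContinuousMap.norm_le _ he.le]
      intro k
      have : Y.2 i k = star ((d.X x).1 i k.swap) := rfl
      rw [this, norm_star]
      exact (((d.X x).1 i).norm_coe_le_norm _).trans
        ((norm_le_pi_norm _ i).trans ((norm_fst_le _).trans hXn))
  have sr : ∀ r : ℝ, star (r : ℂ) = (r : ℂ) := Complex.conj_ofReal
  have e1 : ∀ s t, d.pP Y s t = fun i => star (d.qQ (d.X x) t s i) := by
    intro s t; funext i
    have : d.pP Y s t i = (d.w1 s t : ℂ) * star ((d.X x).2 i (pj t, pj s)) := rfl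
    rw [this, qQ, star_mul', sr, w12]
  have e2 : ∀ s t, d.qQ Y s t = fun i => star (d.pP (d.X x) t s i) := by
    intro s t; funext i
    have : d.qQ Y s t i = (d.w2 s t : ℂ) * star ((d.X x).1 i (pj t, pj s)) := rfl
    rw [this, pP, star_mul', sr, w12]
  have e3 : ∀ s t i, d.Gx x Y s t i = star (d.Gx x (d.X x) t s i) := by
    intro s t i
    have c1 : (fun i => star (d.D1 (t * x.1) (s * x.2) i)) = d.D2 (s * x.1) (t * x.2) := by
      funext i; rw [d.conj1]; simp only [hxdef, star_mul', sr, star_star]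
    have c2 : (fun i => star (d.D2 (t * x.1) (s * x.2) i)) = d.D1 (s * x.1) (t * x.2) := by
      funext i
      have := d.conj1 (s * x.1) (t * x.2) i
      simp only [hxdef, star_mul', sr, star_star] at this ⊢
      rw [← this, star_star]
    have c3 : star (d.E (t * x.1) (s * x.2) i) = d.E (s * x.1) (t * x.2) i := by
      rw [d.conjE]; simp only [hxdef, star_mul', sr, star_star]
    simp only [Gx, Pi.add_apply, star_add, bt_star, e1, e2, c1, c2, c3]
    ring
  have key : Y = d.X x := by
    refine d.eq_X _ hx Y hYn ?_ ?_
    · intro s hs t ht i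
      have h1 : ∫ τ in (0:ℝ)..t, d.Gx x Y s τ i = star (∫ τ in (0:ℝ)..t, d.Gx x (d.X x) τ s i) := by
        simp only [e3]
        exact ii_star _ _ _
      rw [e1]; dsimp only
      rw [d.X2 x hx ht hs, h1, star_mul']
    · intro s hs t ht i
      have h1 : ∫ τ in (0:ℝ)..s, d.Gx x Y τ t i = star (∫ τ in (0:ℝ)..s, d.Gx x (d.X x) t τ i) := by
        simp only [e3]
        exact ii_star _ _ _
      rw [e2]; dsimp only
      rw [d.X1 x hx ht hs, h1, star_mul']
      simp [hxdef]
  conv_lhs => rw [← key]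
  rw [e1]
end GD

theorem ftc (S : Set ℂ) (hS : IsOpen S)
    (hst : ∀ w ∈ S, ∀ t ∈ Set.Icc (0:ℝ) 1, (t:ℂ) * w ∈ S) (F f : ℂ → ℂ)
    (hF : ContDiffOn ℂ 1 F S) (hf : ContinuousOn f S)
    (h : ∀ w ∈ S, F w = w * ∫ t in (0:ℝ)..1, f (t * w)) (w : ℂ) (hw : w ∈ S) :
    HasDerivAt F (f w) w := by
  have hd : ∀ w ∈ S, HasDerivAt F (deriv F w) w := fun w hw =>
    ((hF.differentiableOn one_ne_zero).differentiableAt (hS.mem_nhds hw)).hasDerivAt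
  have main : ∀ w ∈ S, w ≠ 0 → deriv F w = f w := by
    intro w hw hw0
    have hc : Continuous fun τ : ℝ => (τ : ℂ) * w := by fun_prop
    have hO : IsOpen {τ : ℝ | (τ:ℂ) * w ∈ S} := hS.preimage hc
    have h1 : (1:ℝ) ∈ {τ : ℝ | (τ:ℂ) * w ∈ S} := by simpa using hw
    have hcf : ContinuousOn (fun τ : ℝ => f (τ * w)) {τ : ℝ | (τ:ℂ) * w ∈ S} :=
      hf.comp hc.continuousOn fun τ hτ => hτ
    have i1 : HasDerivAt (fun τ : ℝ => ∫ t in (0:ℝ)..τ, f (t * w)) (f ((1:ℝ) * w)) 1 := by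
      refine intervalIntegral.integral_hasDerivAt_right ?_ ?_ ?_
      · refine ContinuousOn.intervalIntegrable (hcf.mono fun τ hτ => ?_)
        rw [Set.uIcc_of_le zero_le_one] at hτ
        exact hst w hw τ hτ
      · exact hcf.stronglyMeasurableAtFilter hO 1 h1
      · exact hcf.continuousAt (hO.mem_nhds h1)
    have i2 : HasDerivAt (fun τ : ℝ => F (τ * w)) (deriv F w * w) 1 := by
      have a1 : HasDerivAt (fun τ : ℝ => (τ:ℂ) * w) w 1 := by
        simpa using (Complex.ofRealCLM.hasDerivAt (x := 1)).mul_const w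
      have a2 : HasDerivAt F (deriv F w) (((1:ℝ):ℂ) * w) := by simpa using hd w hw
      exact a2.comp (1:ℝ) a1
    have i3 : HasDerivAt (fun τ : ℝ => F (τ * w)) (w * f ((1:ℝ) * w)) 1 := by
      refine (i1.const_mul w).congr_of_eventuallyEq ?_
      filter_upwards [hO.mem_nhds h1] with τ hτ
      rw [h _ hτ]
      have := intervalIntegral.smul_integral_comp_mul_left (a := 0) (b := 1)
        (fun y : ℝ => f (y * w)) τ
      rw [mul_zero, mul_one] at this
      rw [← this, Complex.real_smul]
      have e : (fun t : ℝ => f ((t:ℂ) * ((τ:ℂ) * w))) = fun t : ℝ => f (((τ * t : ℝ) : ℂ) * w) := by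
        funext t; congr 1; push_cast; ring
      rw [e]; ring
    have := i2.unique i3
    rw [Complex.ofReal_one, one_mul, mul_comm] at this
    exact mul_left_cancel₀ hw0 this
  by_cases hw0 : w = 0
  · have c1 : ContinuousAt (deriv F) w :=
      (hF.continuousOn_deriv_of_isOpen hS le_rfl).continuousAt (hS.mem_nhds hw)
    have c2 : ContinuousAt f w := hf.continuousAt (hS.mem_nhds hw)
    have t1 : Tendsto (deriv F) (nhdsWithin w {w}ᶜ) (nhds (deriv F w)) :=
      c1.mono_left nhdsWithin_le_nhds
    have t2 : Tendsto (deriv F) (nhdsWithin w {w}ᶜ) (nhds (f w)) := by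
      refine Tendsto.congr' ?_ (c2.mono_left nhdsWithin_le_nhds)
      filter_upwards [self_mem_nhdsWithin, nhdsWithin_le_nhds (hS.mem_nhds hw)] with y hy hyS
      exact (main y hyS (by rintro rfl; exact hy hw0.symm)).symm
    rw [← tendsto_nhds_unique t1 t2]
    exact hd w hw
  · rw [← main w hw hw0]; exact hd w hw

namespace GD
variable (d : GD)

def p (x : ℂ × ℂ) : VV := d.pP (d.X x) 1 1
def q (x : ℂ × ℂ) : VV := d.qQ (d.X x) 1 1
def g (x : ℂ × ℂ) : VV := d.E x.1 x.2 + bt (d.D1 x.1 x.2) (d.q x) + bt (d.p x) (d.D2 x.1 x.2) +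
  bt (d.p x) (d.q x)
def v (x : ℂ × ℂ) : VV := fun i => x.1 * ((Real.exp (64 * d.ω.A 1) : ℝ) : ℂ) *
  d.ω.T2 ((d.X x).1 i) (1, 1)

theorem oneI : (1:ℝ) ∈ Set.Icc (0:ℝ) 1 := by simp

theorem p_scale (x) (hx : x ∈ d.W) {σ τ : ℝ} (hσ : σ ∈ Set.Icc (0:ℝ) 1) (hτ : τ ∈ Set.Icc (0:ℝ) 1) :
    d.p ((σ:ℂ) * x.1, (τ:ℂ) * x.2) = d.pP (d.X x) σ τ := by
  have := (d.scale x hx hσ hτ oneI oneI).1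
  rwa [mul_one, mul_one] at this
theorem q_scale (x) (hx : x ∈ d.W) {σ τ : ℝ} (hσ : σ ∈ Set.Icc (0:ℝ) 1) (hτ : τ ∈ Set.Icc (0:ℝ) 1) :
    d.q ((σ:ℂ) * x.1, (τ:ℂ) * x.2) = d.qQ (d.X x) σ τ := by
  have := (d.scale x hx hσ hτ oneI oneI).2
  rwa [mul_one, mul_one] at this
theorem g_scale (x) (hx : x ∈ d.W) {σ τ : ℝ} (hσ : σ ∈ Set.Icc (0:ℝ) 1) (hτ : τ ∈ Set.Icc (0:ℝ) 1) :
    d.g ((σ:ℂ) * x.1, (τ:ℂ) * x.2) = d.Gx x (d.X x) σ τ := by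
  rw [g, d.p_scale x hx hσ hτ, d.q_scale x hx hσ hτ, Gx]

theorem p_int (x) (hx : x ∈ d.W) (i) :
    d.p x i = x.2 * ∫ t in (0:ℝ)..1, d.g (x.1, (t:ℂ) * x.2) i := by
  rw [p, d.X1 x hx oneI oneI]
  congr 1
  refine intervalIntegral.integral_congr fun τ hτ => ?_
  rw [Set.uIcc_of_le zero_le_one] at hτ
  have := d.g_scale x hx oneI hτ
  rw [Complex.ofReal_one, one_mul] at this
  simp only [this]
theorem q_int (x) (hx : x ∈ d.W) (i) :
    d.q x i = x.1 * ∫ s in (0:ℝ)..1, d.g ((s:ℂ) * x.1, x.2) i := by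
  rw [q, d.X2 x hx oneI oneI]
  congr 1
  refine intervalIntegral.integral_congr fun τ hτ => ?_
  rw [Set.uIcc_of_le zero_le_one] at hτ
  have := d.g_scale x hx hτ oneI
  rw [Complex.ofReal_one, one_mul] at this
  simp only [this]

theorem pj1 : pj 1 = 1 := by
  have := pj_self 1
  simpa using this

theorem ev_smooth (k : KK) (i) (f : ℂ × ℂ → YY) (hf : ContDiffOn ℂ inf f d.W) :
    ContDiffOn ℂ inf (fun x => f x i k) d.W := by
  have h : ContDiff ℂ inf (fun f : AA => f k) := (ContinuousMap.evalCLM ℂ k : AA →L[ℂ] ℂ).contDiff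
  exact h.comp_contDiffOn (contDiffOn_pi.1 hf i)

theorem p_smooth (i) : ContDiffOn ℂ inf (fun x => d.p x i) d.W :=
  contDiffOn_const.mul (d.ev_smooth _ i _ d.X_smooth.fst)
theorem q_smooth (i) : ContDiffOn ℂ inf (fun x => d.q x i) d.W :=
  contDiffOn_const.mul (d.ev_smooth _ i _ d.X_smooth.snd)
theorem D1_smooth (i) : ContDiffOn ℂ inf (fun x : ℂ × ℂ => d.D1 x.1 x.2 i) d.W :=
  (d.ev_smooth (1, 1) i _ d.L1_smooth).congr fun x hx => by rw [d.L1_eq x hx]; simp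
theorem D2_smooth (i) : ContDiffOn ℂ inf (fun x : ℂ × ℂ => d.D2 x.1 x.2 i) d.W :=
  (d.ev_smooth (1, 1) i _ d.L2_smooth).congr fun x hx => by rw [d.L2_eq x hx]; simp
theorem E_smooth (i) : ContDiffOn ℂ inf (fun x : ℂ × ℂ => d.E x.1 x.2 i) d.W :=
  (d.ev_smooth (1, 1) i _ d.LE_smooth).congr fun x hx => by rw [d.LE_eq x hx]; simp
theorem bt_sm (f g : ℂ × ℂ → VV) (hf : ∀ i, ContDiffOn ℂ inf (fun x => f x i) d.W)
    (hg : ∀ i, ContDiffOn ℂ inf (fun x => g x i) d.W) (i) :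
    ContDiffOn ℂ inf (fun x => bt (f x) (g x) i) d.W :=
  (((hf _).mul (hg _)).sub ((hf _).mul (hg _))).const_smul _
theorem g_smooth (i) : ContDiffOn ℂ inf (fun x => d.g x i) d.W :=
  (((d.E_smooth i).add (d.bt_sm _ _ d.D1_smooth d.q_smooth i)).add
    (d.bt_sm _ _ d.p_smooth d.D2_smooth i)).add (d.bt_sm _ _ d.p_smooth d.q_smooth i)
theorem v_smooth (i) : ContDiffOn ℂ inf (fun x => d.v x i) d.W := by
  have h : ContDiffOn ℂ inf (fun x => d.ω.T2v (d.X x).1) d.W :=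
    d.ω.T2v.contDiff.comp_contDiffOn d.X_smooth.fst
  exact (contDiff_fst.contDiffOn.mul contDiffOn_const).mul (d.ev_smooth (1,1) i _ h)

theorem v_norm (x) (hx : x ∈ d.W) (i) : ‖d.v x i‖ ≤ Real.exp (64 * d.ω.C) * d.e0 := by
  have h1 := (d.W_bd x hx).1
  have h2 : ‖d.ω.T2 ((d.X x).1 i) (1, 1)‖ ≤ 1 / 32 * d.e0 :=
    (ContinuousMap.norm_coe_le_norm _ _).trans ((d.ω.T2_norm _).trans (by
      gcongr
      exact (norm_le_pi_norm _ i).trans ((norm_fst_le _).trans (d.X_norm x hx))))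
  have h3 : Real.exp (64 * d.ω.A 1) ≤ Real.exp (64 * d.ω.C) := by
    have := d.ω.A_le 1 le_rfl
    gcongr
  have he := d.e0_pos
  rw [v, norm_mul, norm_mul, Complex.norm_real, Real.norm_of_nonneg (Real.exp_pos _).le]
  calc _ ≤ 2 * Real.exp (64 * d.ω.C) * (1 / 32 * d.e0) := by gcongr
    _ ≤ _ := by nlinarith [mul_pos (Real.exp_pos (64 * d.ω.C)) he]

theorem v_int (x) (hx : x ∈ d.W) (i) :
    d.v x i = x.1 * ∫ s in (0:ℝ)..1, d.p ((s:ℂ) * x.1, x.2) i := by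
  have e : d.ω.T2 ((d.X x).1 i) (1, 1) = ((Real.exp (-(32 * d.ω.A 1)) : ℝ) : ℂ) *
      ∫ τ in (0:ℝ)..1, (d.ω.ker τ : ℂ) * (d.X x).1 i (pj τ, 1) := by
    rw [Wt.T2_apply, Wt.T1_apply]
    simp only [Prod.snd_swap, Prod.fst_swap]
    rfl
  have : ∫ s in (0:ℝ)..1, d.p ((s:ℂ) * x.1, x.2) i = ∫ s in (0:ℝ)..1,
      (Real.exp (32 * d.ω.A 1) : ℂ) * ((d.ω.ker s : ℂ) * (d.X x).1 i (pj s, 1)) := by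
    refine intervalIntegral.integral_congr fun s hs => ?_
    rw [Set.uIcc_of_le zero_le_one] at hs
    have := d.p_scale x hx hs oneI
    rw [Complex.ofReal_one, one_mul] at this
    simp only [this, pP, pj1, w1, rho, Wt.ker, mul_add, Real.exp_add]
    push_cast; ring
  rw [this, intervalIntegral.integral_const_mul, v, e]
  have h2 : (Real.exp (64 * d.ω.A 1) : ℂ) * (Real.exp (-(32 * d.ω.A 1)) : ℂ) =
      Real.exp (32 * d.ω.A 1) := by
    rw [← Complex.ofReal_mul, ← Real.exp_add]; congr 2; ring
  rw [← h2]; ring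

theorem v_int2 (x) (hx : x ∈ d.W) (i) :
    d.v x i = x.2 * ∫ t in (0:ℝ)..1, d.q (x.1, (t:ℂ) * x.2) i := by
  rw [d.v_int x hx i]
  have h1 : ∫ s in (0:ℝ)..1, d.p ((s:ℂ) * x.1, x.2) i =
      ∫ s in (0:ℝ)..1, ∫ t in (0:ℝ)..1, x.2 * d.g ((s:ℂ) * x.1, (t:ℂ) * x.2) i := by
    refine intervalIntegral.integral_congr fun s hs => ?_
    rw [Set.uIcc_of_le zero_le_one] at hs
    have hx' := d.W_star x hx s hs 1 oneI
    rw [Complex.ofReal_one, one_mul] at hx'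
    simp only [d.p_int _ hx' i, intervalIntegral.integral_const_mul]
  have h2 : ∫ t in (0:ℝ)..1, d.q (x.1, (t:ℂ) * x.2) i =
      ∫ t in (0:ℝ)..1, ∫ s in (0:ℝ)..1, x.1 * d.g ((s:ℂ) * x.1, (t:ℂ) * x.2) i := by
    refine intervalIntegral.integral_congr fun s hs => ?_
    rw [Set.uIcc_of_le zero_le_one] at hs
    have hx' := d.W_star x hx 1 oneI s hs
    rw [Complex.ofReal_one, one_mul] at hx'
    simp only [d.q_int _ hx' i, intervalIntegral.integral_const_mul]
  rw [h1, h2]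
  simp only [intervalIntegral.integral_const_mul]
  rw [MeasureTheory.intervalIntegral_intervalIntegral_swap]
  · ring
  · have hc : ContinuousOn (Function.uncurry fun s t : ℝ => d.g ((s:ℂ) * x.1, (t:ℂ) * x.2) i)
        (Set.Icc 0 1 ×ˢ Set.Icc 0 1) := by
      have : Continuous fun k : ℝ × ℝ => ((k.1:ℂ) * x.1, (k.2:ℂ) * x.2) := by fun_prop
      exact (d.g_smooth i).continuousOn.comp this.continuousOn
        fun k hk => d.W_star x hx _ hk.1 _ hk.2
    refine (hc.integrableOn_compact (isCompact_Icc.prod isCompact_Icc)).mono_set ?_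
    rw [Set.uIoc_of_le zero_le_one]
    exact Set.prod_mono Set.Ioc_subset_Icc_self Set.Ioc_subset_Icc_self

theorem slice1 (f : ℂ × ℂ → ℂ) (hf : ContDiffOn ℂ inf f d.W) (w : ℂ) :
    ContDiffOn ℂ 1 (fun z => f (z, w)) {z | (z, w) ∈ d.W} :=
  (hf.of_le (by simp)).comp
    (by fun_prop : ContDiff ℂ 1 fun z : ℂ => (z, w)).contDiffOn fun z hz => hz
theorem slice2 (f : ℂ × ℂ → ℂ) (hf : ContDiffOn ℂ inf f d.W) (z : ℂ) :
    ContDiffOn ℂ 1 (fun w => f (z, w)) {w | (z, w) ∈ d.W} :=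
  (hf.of_le (by simp)).comp
    (by fun_prop : ContDiff ℂ 1 fun w : ℂ => (z, w)).contDiffOn fun z hz => hz

theorem ftc1 (F f : ℂ × ℂ → ℂ) (hF : ContDiffOn ℂ inf F d.W) (hf : ContDiffOn ℂ inf f d.W)
    (h : ∀ x ∈ d.W, F x = x.1 * ∫ t in (0:ℝ)..1, f ((t:ℂ) * x.1, x.2)) (x) (hx : x ∈ d.W) :
    HasDerivAt (fun z => F (z, x.2)) (f x) x.1 := by
  refine ftc {z | (z, x.2) ∈ d.W} (d.W_open.preimage (by fun_prop)) ?_ _ (fun z => f (z, x.2))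
    (d.slice1 F hF x.2) (d.slice1 f hf x.2).continuousOn (fun w hw => h _ hw) x.1 hx
  intro w hw t ht
  have := d.W_star _ hw t ht 1 oneI
  rwa [Complex.ofReal_one, one_mul] at this
theorem ftc2 (F f : ℂ × ℂ → ℂ) (hF : ContDiffOn ℂ inf F d.W) (hf : ContDiffOn ℂ inf f d.W)
    (h : ∀ x ∈ d.W, F x = x.2 * ∫ t in (0:ℝ)..1, f (x.1, (t:ℂ) * x.2)) (x) (hx : x ∈ d.W) :
    HasDerivAt (fun w => F (x.1, w)) (f x) x.2 := by
  refine ftc {w | (x.1, w) ∈ d.W} (d.W_open.preimage (by fun_prop)) ?_ _ (fun w => f (x.1, w))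
    (d.slice2 F hF x.1) (d.slice2 f hf x.1).continuousOn (fun w hw => h _ hw) x.2 hx
  intro w hw t ht
  have := d.W_star _ hw 1 oneI t ht
  rwa [Complex.ofReal_one, one_mul] at this

theorem v_z (x) (hx : x ∈ d.W) (i) : HasDerivAt (fun z => d.v (z, x.2) i) (d.p x i) x.1 :=
  d.ftc1 (fun x => d.v x i) (fun x => d.p x i) (d.v_smooth i) (d.p_smooth i)
    (fun x hx => d.v_int x hx i) x hx
theorem v_w (x) (hx : x ∈ d.W) (i) : HasDerivAt (fun w => d.v (x.1, w) i) (d.q x i) x.2 :=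
  d.ftc2 (fun x => d.v x i) (fun x => d.q x i) (d.v_smooth i) (d.q_smooth i)
    (fun x hx => d.v_int2 x hx i) x hx
theorem p_w (x) (hx : x ∈ d.W) (i) : HasDerivAt (fun w => d.p (x.1, w) i) (d.g x i) x.2 :=
  d.ftc2 (fun x => d.p x i) (fun x => d.g x i) (d.p_smooth i) (d.g_smooth i)
    (fun x hx => d.p_int x hx i) x hx
theorem q_z (x) (hx : x ∈ d.W) (i) : HasDerivAt (fun z => d.q (z, x.2) i) (d.g x i) x.1 :=
  d.ftc1 (fun x => d.q x i) (fun x => d.g x i) (d.q_smooth i) (d.g_smooth i)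
    (fun x hx => d.q_int x hx i) x hx
theorem pq_conj (z : ℂ) (hx : (z, star z) ∈ d.W) (i) :
    d.p (z, star z) i = star (d.q (z, star z) i) := d.conj_sym z hx oneI oneI i
end GD

/-- The real part along the anti-diagonal. -/
def reF (F : ℂ × ℂ → VV) (z : ℂ) : R3 := WithLp.toLp 2 fun i => (F (z, star z) i).re

theorem diag_deriv (F : ℂ × ℂ → ℂ) (z a b : ℂ) (hF : DifferentiableAt ℂ F (z, star z))
    (ha : HasDerivAt (fun z' => F (z', star z)) a z)
    (hb : HasDerivAt (fun w => F (z, w)) b (star z)) :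
    HasFDerivAt (fun z => (F (z, star z)).re)
      (Complex.reCLM ∘L (a • (ContinuousLinearMap.id ℝ ℂ) + b • (Complex.conjCLE : ℂ →L[ℝ] ℂ))) z := by
  have h1 : HasFDerivAt F ((fderiv ℂ F (z, star z)).restrictScalars ℝ) (z, star z) :=
    hF.hasFDerivAt.restrictScalars ℝ
  have h2 : HasFDerivAt (fun z : ℂ => (z, star z))
      ((ContinuousLinearMap.id ℝ ℂ).prod (Complex.conjCLE : ℂ →L[ℝ] ℂ)) z :=
    (hasFDerivAt_id z).prodMk (Complex.conjCLE : ℂ →L[ℝ] ℂ).hasFDerivAt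
  have h3 := Complex.reCLM.hasFDerivAt.comp z (h1.comp z h2)
  refine h3.congr_fderiv ?_
  have ea : fderiv ℂ F (z, star z) (1, 0) = a := by
    have : HasDerivAt (fun z' : ℂ => (z', star z)) ((1:ℂ), (0:ℂ)) z :=
      (hasDerivAt_id z).prodMk (hasDerivAt_const z _)
    have := hF.hasFDerivAt.comp_hasDerivAt z this
    exact this.unique ha
  have eb : fderiv ℂ F (z, star z) (0, 1) = b := by
    have : HasDerivAt (fun w : ℂ => (z, w)) ((0:ℂ), (1:ℂ)) (star z) :=
      (hasDerivAt_const _ _).prodMk (hasDerivAt_id _)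
    have := hF.hasFDerivAt.comp_hasDerivAt (star z) this
    exact this.unique hb
  ext h
  have : ((h, star h) : ℂ × ℂ) = h • ((1:ℂ), (0:ℂ)) + (star h) • ((0:ℂ), (1:ℂ)) := by
    ext <;> simp
  have h5 : fderiv ℂ F (z, star z) (h, star h) = h * a + star h * b := by
    rw [this, map_add, map_smul, map_smul, ea, eb]; rfl
  have h6 : (fderiv ℂ F (z, star z)) (h, (starRingEnd ℂ) h) = h * a + star h * b := h5
  simp
  erw [h6]
  simp
  ring

theorem reF_deriv (F : ℂ × ℂ → VV) (z : ℂ) (a b : VV)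
    (hF : ∀ i, DifferentiableAt ℂ (fun x => F x i) (z, star z))
    (ha : ∀ i, HasDerivAt (fun z' => F (z', star z) i) (a i) z)
    (hb : ∀ i, HasDerivAt (fun w => F (z, w) i) (b i) (star z)) :
    pdx (reF F) z = WithLp.toLp 2 (fun i => (a i + b i).re) ∧
    pdy (reF F) z = WithLp.toLp 2 (fun i => (Complex.I * (a i - b i)).re) := by
  have hd : DifferentiableAt ℝ (reF F) z := by
    rw [differentiableAt_euclidean]
    exact fun i => (diag_deriv (fun x => F x i) z _ _ (hF i) (ha i) (hb i)).differentiableAt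
  have key : ∀ i h, (fderiv ℝ (reF F) z h) i = (a i * h + b i * star h).re := by
    intro i h
    have h1 := ((EuclideanSpace.proj i : R3 →L[ℝ] ℝ).hasFDerivAt.comp z hd.hasFDerivAt)
    have h2 := h1.unique (diag_deriv (fun x => F x i) z _ _ (hF i) (ha i) (hb i))
    have h3 := congrArg (fun L => L h) h2
    simpa using h3
  constructor
  · ext i; rw [pdx, key]; simp
  · ext i; rw [pdy, key]; simp; ring

theorem reF_smooth (F : ℂ × ℂ → VV) (z : ℂ)
    (hF : ∀ i, ContDiffAt ℂ inf (fun x => F x i) (z, star z)) : ContDiffAt ℝ inf (reF F) z := by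
  rw [contDiffAt_euclidean]
  intro i
  have h2 : ContDiffAt ℝ inf (fun z : ℂ => (z, star z)) z :=
    contDiffAt_id.prodMk (Complex.conjCLE : ℂ →L[ℝ] ℂ).contDiff.contDiffAt
  have h3 : ContDiffAt ℝ inf (fun z : ℂ => F (z, star z) i) z :=
    ContDiffAt.comp (g := fun x => F x i) (f := fun z : ℂ => (z, star z)) z
      ((hF i).restrict_scalars ℝ) h2
  exact Complex.reCLM.contDiff.contDiffAt.comp z h3

theorem real_conv (W : Set (ℂ × ℂ)) (hW : IsOpen W) (Y p q g : ℂ × ℂ → VV)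
    (sY : ∀ i, ContDiffOn ℂ inf (fun x => Y x i) W)
    (sp : ∀ i, ContDiffOn ℂ inf (fun x => p x i) W)
    (sq : ∀ i, ContDiffOn ℂ inf (fun x => q x i) W)
    (hYz : ∀ x ∈ W, ∀ i, HasDerivAt (fun z => Y (z, x.2) i) (p x i) x.1)
    (hYw : ∀ x ∈ W, ∀ i, HasDerivAt (fun w => Y (x.1, w) i) (q x i) x.2)
    (hpw : ∀ x ∈ W, ∀ i, HasDerivAt (fun w => p (x.1, w) i) (g x i) x.2)
    (hqz : ∀ x ∈ W, ∀ i, HasDerivAt (fun z => q (z, x.2) i) (g x i) x.1)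
    (hg : ∀ x ∈ W, g x = bt (p x) (q x))
    (hc : ∀ z, (z, star z) ∈ W → ∀ i, p (z, star z) i = star (q (z, star z) i))
    (z : ℂ) (hz : (z, star z) ∈ W) :
    ContDiffAt ℝ inf (reF Y) z ∧
    lap (reF Y) z = (2:ℝ) • cross (pdx (reF Y) z) (pdy (reF Y) z) := by
  have hO : IsOpen {z : ℂ | (z, star z) ∈ W} :=
    hW.preimage (continuous_id.prodMk continuous_star)
  have sd : ∀ (F : ℂ × ℂ → VV), (∀ i, ContDiffOn ℂ inf (fun x => F x i) W) →
      ∀ x ∈ W, ∀ i, ContDiffAt ℂ inf (fun x => F x i) x :=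
    fun F hF x hx i => (hF i).contDiffAt (hW.mem_nhds hx)
  have dd : ∀ (F : ℂ × ℂ → VV), (∀ i, ContDiffOn ℂ inf (fun x => F x i) W) →
      ∀ x ∈ W, ∀ i, DifferentiableAt ℂ (fun x => F x i) x :=
    fun F hF x hx i => (sd F hF x hx i).differentiableAt (by simp)
  refine ⟨reF_smooth Y z (sd Y sY _ hz), ?_⟩
  have e1 : ∀ z, (z, star z) ∈ W → pdx (reF Y) z = reF (fun x i => p x i + q x i) z ∧
      pdy (reF Y) z = reF (fun x i => Complex.I * (p x i - q x i)) z := fun z hz =>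
    reF_deriv Y z _ _ (dd Y sY _ hz) (hYz _ hz) (hYw _ hz)
  have ex : pdx (reF Y) =ᶠ[nhds z] reF (fun x i => p x i + q x i) := by
    filter_upwards [hO.mem_nhds hz] with z' hz' using (e1 z' hz').1
  have ey : pdy (reF Y) =ᶠ[nhds z] reF (fun x i => Complex.I * (p x i - q x i)) := by
    filter_upwards [hO.mem_nhds hz] with z' hz' using (e1 z' hz').2
  have slz : ∀ (F : ℂ × ℂ → VV), (∀ i, ContDiffOn ℂ inf (fun x => F x i) W) →
      ∀ i, HasDerivAt (fun z' => F (z', star z) i) (deriv (fun z' => F (z', star z) i) z) z := by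
    intro F hF i
    have : DifferentiableAt ℂ (fun z' => F (z', star z) i) z :=
      DifferentiableAt.comp z (g := fun x => F x i) (f := fun z' : ℂ => (z', star z))
        (dd F hF _ hz i) (by fun_prop)
    exact this.hasDerivAt
  have slw : ∀ (F : ℂ × ℂ → VV), (∀ i, ContDiffOn ℂ inf (fun x => F x i) W) →
      ∀ i, HasDerivAt (fun w => F (z, w) i) (deriv (fun w => F (z, w) i) (star z)) (star z) := by
    intro F hF i
    have : DifferentiableAt ℂ (fun w => F (z, w) i) (star z) :=
      DifferentiableAt.comp (star z) (g := fun x => F x i) (f := fun w : ℂ => (z, w))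
        (dd F hF _ hz i) (by fun_prop)
    exact this.hasDerivAt
  have l1 := (reF_deriv (fun x i => p x i + q x i) z _ _
    (fun i => (dd p sp _ hz i).add (dd q sq _ hz i))
    (fun i => (slz p sp i).add (hqz _ hz i)) (fun i => (hpw _ hz i).add (slw q sq i))).1
  have l2 := (reF_deriv (fun x i => Complex.I * (p x i - q x i)) z _ _
    (fun i => ((dd p sp _ hz i).sub (dd q sq _ hz i)).const_mul _)
    (fun i => ((slz p sp i).sub (hqz _ hz i)).const_mul Complex.I)
    (fun i => ((hpw _ hz i).sub (slw q sq i)).const_mul Complex.I)).2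
  have m1 : pdx (pdx (reF Y)) z = pdx (reF (fun x i => p x i + q x i)) z := by
    unfold pdx; rw [← ex.fderiv_eq]; rfl
  have m2 : pdy (pdy (reF Y)) z = pdy (reF (fun x i => Complex.I * (p x i - q x i))) z := by
    unfold pdy; rw [← ey.fderiv_eq]; rfl
  rw [lap, m1, m2, l1, l2, (e1 z hz).1, (e1 z hz).2, hg _ hz]
  have hp := hc z hz
  have r : ∀ i, (p (z, star z) i).re = (q (z, star z) i).re := fun i => by rw [hp]; simp
  have m : ∀ i, (p (z, star z) i).im = -(q (z, star z) i).im := fun i => by rw [hp]; simp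
  simp only [reF]
  generalize p (z, star z) = P at *
  generalize q (z, star z) = Q at *
  have f1 : (1 : Fin 3) + 1 = 2 := rfl
  have f2 : (2 : Fin 3) + 1 = 0 := rfl
  have f3 : (1 : Fin 3) + 2 = 0 := rfl
  have f4 : (2 : Fin 3) + 2 = 1 := rfl
  ext i
  fin_cases i <;>
  · simp [cross, e3, bt, r, m, f1, f2, f3, f4]
    ring

/-- Right-handed orthonormal frames. -/
structure Fr where
  e1 : Fin 3 → ℝ
  e2 : Fin 3 → ℝ
  v : Fin 3 → ℝ
  c1 : ∀ i, e1 (i + 1) * e2 (i + 2) - e1 (i + 2) * e2 (i + 1) = v i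
  c2 : ∀ i, v (i + 1) * e1 (i + 2) - v (i + 2) * e1 (i + 1) = e2 i
  c3 : ∀ i, e2 (i + 1) * v (i + 2) - e2 (i + 2) * v (i + 1) = e1 i
  n1 : e1 0 ^ 2 + e1 1 ^ 2 + e1 2 ^ 2 = 1
  n2 : e2 0 ^ 2 + e2 1 ^ 2 + e2 2 ^ 2 = 1
  n3 : v 0 ^ 2 + v 1 ^ 2 + v 2 ^ 2 = 1
  o12 : e1 0 * e2 0 + e1 1 * e2 1 + e1 2 * e2 2 = 0
  o13 : e1 0 * v 0 + e1 1 * v 1 + e1 2 * v 2 = 0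
  o23 : e2 0 * v 0 + e2 1 * v 1 + e2 2 * v 2 = 0

theorem exists_perp (a b c : ℝ) (h : a ^ 2 + b ^ 2 + c ^ 2 = 1) :
    ∃ x y z : ℝ, x ^ 2 + y ^ 2 + z ^ 2 = 1 ∧ x * a + y * b + z * c = 0 := by
  by_cases hab : a ^ 2 + b ^ 2 = 0
  · refine ⟨1, 0, 0, by norm_num, ?_⟩
    have : a = 0 := by nlinarith [sq_nonneg a, sq_nonneg b]
    simp [this]
  · have hp : 0 < a ^ 2 + b ^ 2 := lt_of_le_of_ne (by positivity) (Ne.symm hab)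
    have hs := Real.sq_sqrt hp.le
    have hs0 : Real.sqrt (a ^ 2 + b ^ 2) ≠ 0 := (Real.sqrt_pos.2 hp).ne'
    refine ⟨-b / Real.sqrt (a ^ 2 + b ^ 2), a / Real.sqrt (a ^ 2 + b ^ 2), 0, ?_, ?_⟩
    · rw [div_pow, div_pow, hs]; field_simp; ring
    · field_simp; ring

theorem exists_frame (v : Fin 3 → ℝ) (hv : v 0 ^ 2 + v 1 ^ 2 + v 2 ^ 2 = 1) :
    ∃ F : Fr, F.v = v := by
  obtain ⟨x, y, z, h1, h2⟩ := exists_perp _ _ _ hv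
  generalize ha : v 0 = a at *
  generalize hb : v 1 = b at *
  generalize hc : v 2 = c at *
  have hvv : v = ![a, b, c] := by ext i; fin_cases i <;> simp [ha, hb, hc]
  have f1 : (1 : Fin 3) + 1 = 2 := rfl
  have f2 : (2 : Fin 3) + 1 = 0 := rfl
  have f3 : (1 : Fin 3) + 2 = 0 := rfl
  have f4 : (2 : Fin 3) + 2 = 1 := rfl
  refine ⟨⟨![x, y, z], ![b * z - c * y, c * x - a * z, a * y - b * x], ![a, b, c],
    ?_, ?_, ?_, ?_, ?_, ?_, ?_, ?_, ?_⟩, hvv.symm⟩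
  · intro i; fin_cases i
    · simp [f1, f2, f3, f4]; linear_combination a * h1 - x * h2
    · simp [f1, f2, f3, f4]; linear_combination b * h1 - y * h2
    · simp [f1, f2, f3, f4]; linear_combination c * h1 - z * h2
  · intro i; fin_cases i <;> simp [f1, f2, f3, f4]
  · intro i; fin_cases i
    · simp [f1, f2, f3, f4]; linear_combination x * hv - a * h2
    · simp [f1, f2, f3, f4]; linear_combination y * hv - b * h2
    · simp [f1, f2, f3, f4]; linear_combination z * hv - c * h2
  · simpa using h1
  · simp; linear_combination (a ^ 2 + b ^ 2 + c ^ 2) * h1 + hv - (x * a + y * b + z * c) * h2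
  · simpa using hv
  · simp; ring
  · simpa using h2
  · simp; ring

namespace Fr
variable (F : Fr)
def nu (i : Fin 3) : ℂ := F.e1 i - Complex.I * F.e2 i
def nb (i : Fin 3) : ℂ := F.e1 i + Complex.I * F.e2 i
def vv (i : Fin 3) : ℂ := F.v i

theorem Rel1 (i) : -Complex.I * (F.nu (i+1) * F.nb (i+2) - F.nu (i+2) * F.nb (i+1)) = 2 * F.vv i := by
  have : (F.vv i) = (F.e1 (i + 1) * F.e2 (i + 2) - F.e1 (i + 2) * F.e2 (i + 1) : ℂ) := by
    rw [vv, ← F.c1]; push_cast; ring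
  rw [this, nu, nb, nu, nb]
  linear_combination (-2 * ((F.e1 (i + 1) : ℂ) * F.e2 (i + 2) - F.e1 (i + 2) * F.e2 (i + 1)))
    * Complex.I_sq
theorem Rel2 (i) : -Complex.I * (F.vv (i+1) * F.nu (i+2) - F.vv (i+2) * F.nu (i+1)) = F.nu i := by
  have h2 : (F.v (i + 1) * F.e1 (i + 2) - F.v (i + 2) * F.e1 (i + 1) : ℂ) = F.e2 i := by
    rw [← F.c2]; push_cast; ring
  have h3 : (F.e2 (i + 1) * F.v (i + 2) - F.e2 (i + 2) * F.v (i + 1) : ℂ) = F.e1 i := by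
    rw [← F.c3]; push_cast; ring
  simp only [nu, vv]
  linear_combination -Complex.I * h2 - Complex.I ^ 2 * h3 - Complex.I_sq * F.e1 i
theorem Rel3 (i) : -Complex.I * (F.vv (i+1) * F.nb (i+2) - F.vv (i+2) * F.nb (i+1)) = -F.nb i := by
  have h2 : (F.v (i + 1) * F.e1 (i + 2) - F.v (i + 2) * F.e1 (i + 1) : ℂ) = F.e2 i := by
    rw [← F.c2]; push_cast; ring
  have h3 : (F.e2 (i + 1) * F.v (i + 2) - F.e2 (i + 2) * F.v (i + 1) : ℂ) = F.e1 i := by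
    rw [← F.c3]; push_cast; ring
  simp only [nb, vv]
  linear_combination -Complex.I * h2 + Complex.I ^ 2 * h3 + Complex.I_sq * F.e1 i
theorem star_nu (i) : star (F.nu i) = F.nb i := by simp [nu, nb]
theorem star_nb (i) : star (F.nb i) = F.nu i := by simp [nu, nb]; ring
theorem star_vv (i) : star (F.vv i) = F.vv i := by simp [vv]

theorem abs_le_one_of {a b c : ℝ} (h : a ^ 2 + b ^ 2 + c ^ 2 = 1) :
    |a| ≤ 1 ∧ |b| ≤ 1 ∧ |c| ≤ 1 :=
  ⟨abs_le_one_iff_mul_self_le_one.2 (by nlinarith), abs_le_one_iff_mul_self_le_one.2 (by nlinarith),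
    abs_le_one_iff_mul_self_le_one.2 (by nlinarith)⟩
theorem e1_le (i) : |F.e1 i| ≤ 1 := by
  obtain ⟨h1, h2, h3⟩ := abs_le_one_of F.n1
  fin_cases i <;> assumption
theorem e2_le (i) : |F.e2 i| ≤ 1 := by
  obtain ⟨h1, h2, h3⟩ := abs_le_one_of F.n2
  fin_cases i <;> assumption
theorem v_le (i) : |F.v i| ≤ 1 := by
  obtain ⟨h1, h2, h3⟩ := abs_le_one_of F.n3
  fin_cases i <;> assumption
theorem nu_norm (i) : ‖F.nu i‖ ≤ 2 := by
  refine (norm_sub_le _ _).trans ?_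
  have h1 := F.e1_le i; have h2 := F.e2_le i
  rw [norm_mul, Complex.norm_I, Complex.norm_real, Complex.norm_real, Real.norm_eq_abs,
    Real.norm_eq_abs]
  linarith
theorem nb_norm (i) : ‖F.nb i‖ ≤ 2 := by rw [← star_nu, norm_star]; exact F.nu_norm i
theorem vv_norm (i) : ‖F.vv i‖ ≤ 1 := by
  rw [vv, Complex.norm_real, Real.norm_eq_abs]; exact F.v_le i

/-- Bubble formulas in an algebra. -/
def fB {R : Type*} [CommRing R] [Algebra ℂ R] (a b c : R) (i : Fin 3) : R :=
  c * (F.nu i • a + F.nb i • b + (2 * F.vv i) • (a * b))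
def fD1 {R : Type*} [CommRing R] [Algebra ℂ R] (μ : ℂ) (a b c : R) (i : Fin 3) : R :=
  μ • (a * (c ^ 2 * (F.nu i • 1 + (2 * F.vv i) • b - F.nb i • b ^ 2)))
def fD2 {R : Type*} [CommRing R] [Algebra ℂ R] (μ : ℂ) (a b c : R) (i : Fin 3) : R :=
  μ • (b * (c ^ 2 * (F.nb i • 1 + (2 * F.vv i) • a - F.nu i • a ^ 2)))

theorem fD1_star (μ a b c : ℂ) (i) :
    star (F.fD1 μ a b c i) = F.fD2 (star μ) (star b) (star a) (star c) i := by
  simp only [fD1, fD2, smul_eq_mul, star_mul', star_sub, star_add, star_pow, star_nu, star_nb,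
    star_vv, star_one, star_ofNat]

theorem fD_mixed (μ μ' a b c : ℂ) (hc : c * (1 + a * b) = 1) (i) :
    bt (F.fD1 μ a b c) (F.fD2 μ' a b c) i =
    μ * a * (μ' * b) * c ^ 3 * (2 * (1 - a * b) * F.vv i - 2 * b * F.nb i - 2 * a * F.nu i) := by
  simp only [bt, fD1, fD2, smul_eq_mul]
  have h : μ * a * (μ' * b) * c ^ 3 * (2 * (1 - a * b) * F.vv i - 2 * b * F.nb i - 2 * a * F.nu i)
    = μ * a * (μ' * b) * c ^ 4 * ((1 + a * b) *
      (2 * (1 - a * b) * F.vv i - 2 * b * F.nb i - 2 * a * F.nu i)) := by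
    linear_combination (-(μ * a * (μ' * b) * c ^ 3 *
      (2 * (1 - a * b) * F.vv i - 2 * b * F.nb i - 2 * a * F.nu i))) * hc
  rw [h]
  linear_combination (μ * a * (μ' * b) * c ^ 4) * ((1 - a ^ 2 * b ^ 2) * F.Rel1 i
    - (2 * a + 2 * a ^ 2 * b) * F.Rel2 i + (2 * b + 2 * a * b ^ 2) * F.Rel3 i)

theorem fD1_norm (μ a b c : ℂ) (M : ℝ) (hb : ‖b‖ ≤ M) (hc : ‖c‖ ≤ 4) (i) :
    ‖F.fD1 μ a b c i‖ ≤ 32 * (1 + M + M ^ 2) * ‖μ‖ * ‖a‖ := by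
  have h1 := F.nu_norm i; have h2 := F.nb_norm i; have h3 := F.vv_norm i
  have hM : 0 ≤ M := (norm_nonneg _).trans hb
  have : ‖F.nu i * 1 + (2 * F.vv i) * b - F.nb i * b ^ 2‖ ≤ 2 * (1 + M + M ^ 2) := by
    calc _ ≤ ‖F.nu i * 1‖ + ‖(2 * F.vv i) * b‖ + ‖F.nb i * b ^ 2‖ :=
          (norm_sub_le _ _).trans (by gcongr; exact norm_add_le _ _)
      _ ≤ 2 * 1 + 2 * 1 * M + 2 * M ^ 2 := by
          simp only [norm_mul, norm_pow, norm_one, RCLike.norm_ofNat]; gcongr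
      _ = _ := by ring
  simp only [fD1, smul_eq_mul, norm_mul, norm_pow] at this ⊢
  calc _ ≤ ‖μ‖ * (‖a‖ * (4 ^ 2 * (2 * (1 + M + M ^ 2)))) := by gcongr
    _ = _ := by ring
theorem fD2_norm (μ a b c : ℂ) (M : ℝ) (hb : ‖a‖ ≤ M) (hc : ‖c‖ ≤ 4) (i) :
    ‖F.fD2 μ a b c i‖ ≤ 32 * (1 + M + M ^ 2) * ‖μ‖ * ‖b‖ := by
  have := F.fD1_norm (star μ) (star b) (star a) (star c) M (by rwa [norm_star])
    (by rwa [norm_star]) i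
  have h2 := F.fD1_star (star μ) (star b) (star a) (star c) i
  simp only [star_star] at h2
  rw [← h2, norm_star]
  simpa only [norm_star] using this

/-- derivative in the first variable -/
theorem fB_deriv1 (a : ℂ → ℂ) (z μ b : ℂ) (ha : HasDerivAt a (μ * a z) z)
    (h : 1 + a z * b ≠ 0) (i) :
    HasDerivAt (fun z => F.fB (a z) b (1 + a z * b)⁻¹ i)
      (F.fD1 μ (a z) b (1 + a z * b)⁻¹ i) z := by
  have h1 : HasDerivAt (fun z => 1 + a z * b) (μ * a z * b) z :=
    (ha.mul_const b).const_add 1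
  have h2 : HasDerivAt (fun z => F.nu i * a z + F.nb i * b + (2 * F.vv i) * (a z * b))
      (F.nu i * (μ * a z) + (2 * F.vv i) * (μ * a z * b)) z :=
    ((ha.const_mul _).add_const _).add ((ha.mul_const b).const_mul _)
  have h3 := (h1.fun_inv h).mul h2
  refine h3.congr_deriv ?_
  simp only [fD1, smul_eq_mul]
  field_simp
  ring
theorem fB_deriv2 (b : ℂ → ℂ) (w μ a : ℂ) (hb : HasDerivAt b (μ * b w) w)
    (h : 1 + a * b w ≠ 0) (i) :
    HasDerivAt (fun w => F.fB a (b w) (1 + a * b w)⁻¹ i)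
      (F.fD2 μ a (b w) (1 + a * b w)⁻¹ i) w := by
  have h1 : HasDerivAt (fun w => 1 + a * b w) (a * (μ * b w)) w :=
    (hb.const_mul a).const_add 1
  have h2 : HasDerivAt (fun w => F.nu i * a + F.nb i * b w + (2 * F.vv i) * (a * b w))
      (F.nb i * (μ * b w) + (2 * F.vv i) * (a * (μ * b w))) w :=
    ((hb.const_mul _).const_add _).add ((hb.const_mul a).const_mul _)
  have h3 := (h1.fun_inv h).mul h2
  refine h3.congr_deriv ?_
  simp only [fD2, smul_eq_mul]
  field_simp
  ring
theorem fD1_deriv2 (b : ℂ → ℂ) (w μ μ' a : ℂ) (hb : HasDerivAt b (μ' * b w) w)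
    (h : 1 + a * b w ≠ 0) (i) :
    HasDerivAt (fun w => F.fD1 μ a (b w) (1 + a * b w)⁻¹ i)
      (bt (F.fD1 μ a (b w) (1 + a * b w)⁻¹) (F.fD2 μ' a (b w) (1 + a * b w)⁻¹) i) w := by
  rw [F.fD_mixed _ _ _ _ _ (inv_mul_cancel₀ h)]
  have h1 : HasDerivAt (fun w => 1 + a * b w) (a * (μ' * b w)) w :=
    (hb.const_mul a).const_add 1
  have h2 : HasDerivAt (fun w => F.nu i * 1 + (2 * F.vv i) * b w - F.nb i * b w ^ 2)
      ((2 * F.vv i) * (μ' * b w) - F.nb i * (2 * b w * (μ' * b w))) w := by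
    refine ((((hb.const_mul (2 * F.vv i)).const_add (F.nu i * 1))).sub
      ((hb.fun_pow 2).const_mul (F.nb i))).congr_deriv ?_
    simp
  have h3 := ((((h1.fun_inv h).fun_pow 2).fun_mul h2).const_mul a).const_mul μ
  refine h3.congr_deriv ?_
  simp only [Nat.cast_ofNat, Nat.add_one_sub_one, pow_one]
  field_simp
  ring
theorem fD2_deriv1 (a : ℂ → ℂ) (z μ μ' b : ℂ) (ha : HasDerivAt a (μ * a z) z)
    (h : 1 + a z * b ≠ 0) (i) :
    HasDerivAt (fun z => F.fD2 μ' (a z) b (1 + a z * b)⁻¹ i)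
      (bt (F.fD1 μ (a z) b (1 + a z * b)⁻¹) (F.fD2 μ' (a z) b (1 + a z * b)⁻¹) i) z := by
  rw [F.fD_mixed _ _ _ _ _ (inv_mul_cancel₀ h)]
  have h1 : HasDerivAt (fun z => 1 + a z * b) (μ * a z * b) z :=
    (ha.mul_const b).const_add 1
  have h2 : HasDerivAt (fun z => F.nb i * 1 + (2 * F.vv i) * a z - F.nu i * a z ^ 2)
      ((2 * F.vv i) * (μ * a z) - F.nu i * (2 * a z * (μ * a z))) z := by
    refine ((((ha.const_mul (2 * F.vv i)).const_add (F.nb i * 1))).sub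
      ((ha.fun_pow 2).const_mul (F.nu i))).congr_deriv ?_
    simp
  have h3 := ((((h1.fun_inv h).fun_pow 2).fun_mul h2).const_mul b).const_mul μ'
  refine h3.congr_deriv ?_
  simp only [Nat.cast_ofNat, Nat.add_one_sub_one, pow_one]
  field_simp
  ring
end Fr

theorem AA_exp_apply (f : AA) (k : KK) : (NormedSpace.exp f : AA) k = Complex.exp (f k) := by
  let _ : NormedAlgebra ℚ AA := NormedAlgebra.restrictScalars ℚ ℂ AA
  have := NormedSpace.map_exp (ContinuousMap.evalAlgHom ℂ ℂ k : AA →ₐ[ℂ] ℂ)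
    (by exact continuous_eval_const k) f
  rw [Complex.exp_eq_exp_ℂ]
  exact this

theorem AA_exp_smooth : ContDiff ℂ inf (NormedSpace.exp : AA → AA) :=
  contDiff_iff_contDiffAt.2 fun x => (NormedSpace.exp_analytic (𝕂 := ℂ) x).contDiffAt

theorem AA_inv_apply (f : AA) (h : ∀ k, f k ≠ 0) (k : KK) : (Ring.inverse f) k = (f k)⁻¹ := by
  have hu := (ContinuousMap.isUnit_iff_forall_ne_zero f).2 h
  have h1 := Ring.mul_inverse_cancel f hu
  have h2 : f k * (Ring.inverse f) k = 1 := by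
    rw [← ContinuousMap.mul_apply, h1, ContinuousMap.one_apply]
  exact eq_inv_of_mul_eq_one_right h2

theorem AA_inv_smooth (f : AA) (h : ∀ k, f k ≠ 0) : ContDiffAt ℂ inf Ring.inverse f := by
  obtain ⟨u, rfl⟩ := (ContinuousMap.isUnit_iff_forall_ne_zero f).2 h
  exact contDiffAt_ringInverse ℂ u

/-- first coordinate -/
def kap1 : AA := ⟨fun k => ((k.1 : ℝ) : ℂ), by fun_prop⟩
/-- second coordinate -/
def kap2 : AA := ⟨fun k => ((k.2 : ℝ) : ℂ), by fun_prop⟩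

theorem Fr.fD1_apply (F : Fr) (μ : ℂ) (a b c : AA) (i) (k : KK) :
    F.fD1 μ a b c i k = F.fD1 μ (a k) (b k) (c k) i := by
  simp [Fr.fD1]
theorem Fr.fD2_apply (F : Fr) (μ : ℂ) (a b c : AA) (i) (k : KK) :
    F.fD2 μ a b c i k = F.fD2 μ (a k) (b k) (c k) i := by
  simp [Fr.fD2]
theorem bt_apply (a b : YY) (i) (k : KK) :
    bt a b i k = bt (fun i => a i k) (fun i => b i k) i := by
  simp [bt]

theorem Fr.fD1_smooth {Ev : Type*} [NormedAddCommGroup Ev] [NormedSpace ℂ Ev] (F : Fr) (μ : ℂ)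
    (a b c : Ev → AA) (x : Ev) (ha : ContDiffAt ℂ inf a x) (hb : ContDiffAt ℂ inf b x)
    (hc : ContDiffAt ℂ inf c x) :
    ContDiffAt ℂ inf (fun x => F.fD1 μ (a x) (b x) (c x)) x := by
  rw [contDiffAt_pi]
  intro i
  unfold Fr.fD1
  exact ((ha.mul ((hc.pow 2).mul ((contDiffAt_const.add (hb.const_smul _)).sub
    ((hb.pow 2).const_smul _))))).const_smul _
theorem Fr.fD2_smooth {Ev : Type*} [NormedAddCommGroup Ev] [NormedSpace ℂ Ev] (F : Fr) (μ : ℂ)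
    (a b c : Ev → AA) (x : Ev) (ha : ContDiffAt ℂ inf a x) (hb : ContDiffAt ℂ inf b x)
    (hc : ContDiffAt ℂ inf c x) :
    ContDiffAt ℂ inf (fun x => F.fD2 μ (a x) (b x) (c x)) x := by
  rw [contDiffAt_pi]
  intro i
  unfold Fr.fD2
  exact ((hb.mul ((hc.pow 2).mul ((contDiffAt_const.add (ha.const_smul _)).sub
    ((ha.pow 2).const_smul _))))).const_smul _

/-- Parameters of the multi-bubble. -/
structure BD where
  k : ℕ
  F : Fin k → Fr
  pt : Fin k → ℂ
  M : ℝ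
  Λ : ℝ
  c : ℝ
  hpt : ∀ j, ‖pt j‖ = 1
  hM : 2 ≤ M
  hΛ : 2 ≤ Λ
  hc : 0 < c
  hc2 : c ≤ 1 / 2
  hsep : ∀ i j, i ≠ j → ‖pt i + pt j‖ ≤ 2 - 2 * c
  hsmall : Real.exp (64 * (2 * ((k + 1) * (32 * (1 + M + M ^ 2)) * M))) *
    (2 * Real.exp (-(c * Λ))) ≤ 1 / 2
  hphase : 2 * Real.log (2 * M ^ 2) ^ 3 ≤ Λ - 1

namespace BD
variable (B : BD)
def Q : ℝ := 32 * (1 + B.M + B.M ^ 2)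
def K : ℝ := (B.k + 1) * B.Q * B.M
def lam : ℝ := B.Λ - 1
def R : ℝ := B.Λ / B.lam
theorem M_pos : 0 < B.M := by have := B.hM; linarith
theorem Λ_pos : 0 < B.Λ := by have := B.hΛ; linarith
theorem lam_pos : 0 < B.lam := by have := B.hΛ; unfold lam; linarith
theorem lam_le : B.lam ≤ B.Λ := by unfold lam; linarith
theorem Q_pos : 0 < B.Q := by have := B.M_pos; unfold Q; positivity
theorem K_pos : 0 < B.K := by have := B.M_pos; have := B.Q_pos; unfold K; positivity
theorem R_pos : 0 < B.R := div_pos B.Λ_pos B.lam_pos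
theorem lam_R : B.lam * B.R = B.Λ := mul_div_cancel₀ _ B.lam_pos.ne'
theorem R_gt : 1 < B.R := by
  unfold R; rw [lt_div_iff₀ B.lam_pos]; unfold lam; linarith
theorem R_le : B.R ≤ 2 := by
  unfold R; rw [div_le_iff₀ B.lam_pos]; have := B.hΛ; unfold lam; linarith

/-- the exponential profile -/
def hh (j : Fin B.k) (z : ℂ) : ℂ := B.M * Complex.exp ((B.lam * star (B.pt j)) * z - B.Λ)
def hs (j : Fin B.k) (z : ℂ) : ℂ := B.M * Complex.exp ((B.lam * B.pt j) * z - B.Λ)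
def cc (j : Fin B.k) (a b : ℂ) : ℂ := (1 + B.hh j a * B.hs j b)⁻¹
def D1j (j : Fin B.k) (a b : ℂ) : VV :=
  (B.F j).fD1 (B.lam * star (B.pt j)) (B.hh j a) (B.hs j b) (B.cc j a b)
def D2j (j : Fin B.k) (a b : ℂ) : VV :=
  (B.F j).fD2 (B.lam * B.pt j) (B.hh j a) (B.hs j b) (B.cc j a b)
def Uj (j : Fin B.k) (a b : ℂ) : VV := (B.F j).fB (B.hh j a) (B.hs j b) (B.cc j a b)
def D1 (a b : ℂ) : VV := ∑ j, B.D1j j a b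
def D2 (a b : ℂ) : VV := ∑ j, B.D2j j a b
def UU (a b : ℂ) : VV := ∑ j, B.Uj j a b
def EE (a b : ℂ) : VV := ∑ i, ∑ j, if i = j then 0 else bt (B.D1j i a b) (B.D2j j a b)

theorem star_hh (j z) : star (B.hh j z) = B.hs j (star z) := by
  simp only [hh, hs, star_mul', Complex.star_def, ← Complex.exp_conj, map_sub, map_mul,
    Complex.conj_ofReal, Complex.conj_conj]
theorem star_hs (j z) : star (B.hs j z) = B.hh j (star z) := by
  rw [← star_star z, ← star_hh, star_star, star_star]
theorem star_cc (j a b) : star (B.cc j a b) = B.cc j (star b) (star a) := by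
  simp only [cc, star_inv₀, star_add, star_one, star_mul', star_hh, star_hs]
  rw [mul_comm]
theorem star_D1j (j a b i) : star (B.D1j j a b i) = B.D2j j (star b) (star a) i := by
  rw [D1j, Fr.fD1_star, star_hh, star_hs, star_cc, D2j]
  congr 1
  simp
theorem star_D2j (j a b i) : star (B.D2j j a b i) = B.D1j j (star b) (star a) i := by
  rw [← star_star a, ← star_star b, ← star_D1j, star_star, star_star, star_star]

theorem conj1 (a b i) : star (B.D1 a b i) = B.D2 (star b) (star a) i := by
  simp only [D1, D2, Finset.sum_apply, star_sum, star_D1j]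
theorem bt_star (x y x' y' : VV) (hx : ∀ i, star (x i) = x' i) (hy : ∀ i, star (y i) = y' i) (i) :
    star (bt x y i) = bt y' x' i := by
  simp only [bt, smul_eq_mul, star_mul', star_sub, hx, hy]
  simp
  ring
theorem conjE (a b i) : star (B.EE a b i) = B.EE (star b) (star a) i := by
  simp only [EE, Finset.sum_apply, star_sum]
  rw [Finset.sum_comm]
  refine Finset.sum_congr rfl fun m _ => Finset.sum_congr rfl fun n _ => ?_
  by_cases h : n = m
  · simp [h]
  · rw [if_neg h, if_neg (Ne.symm h)]
    exact bt_star _ _ _ _ (B.star_D1j _ _ _) (B.star_D2j _ _ _) i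

/-- lifts -/
def Lh (j : Fin B.k) (x : ℂ × ℂ) : AA :=
  (B.M : ℂ) • NormedSpace.exp ((B.lam * star (B.pt j) * x.1) • kap1 - (B.Λ : ℂ) • (1 : AA))
def Ls (j : Fin B.k) (x : ℂ × ℂ) : AA :=
  (B.M : ℂ) • NormedSpace.exp ((B.lam * B.pt j * x.2) • kap2 - (B.Λ : ℂ) • (1 : AA))
def Ld (j : Fin B.k) (x : ℂ × ℂ) : AA := 1 + B.Lh j x * B.Ls j x
def Lc (j : Fin B.k) (x : ℂ × ℂ) : AA := Ring.inverse (B.Ld j x)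
def LD1 (j : Fin B.k) (x : ℂ × ℂ) : YY :=
  (B.F j).fD1 (B.lam * star (B.pt j)) (B.Lh j x) (B.Ls j x) (B.Lc j x)
def LD2 (j : Fin B.k) (x : ℂ × ℂ) : YY :=
  (B.F j).fD2 (B.lam * B.pt j) (B.Lh j x) (B.Ls j x) (B.Lc j x)
def LEE (x : ℂ × ℂ) : YY := ∑ i, ∑ j, if i = j then 0 else bt (B.LD1 i x) (B.LD2 j x)

theorem Lh_apply (j x) (k : KK) : B.Lh j x k = B.hh j ((k.1 : ℝ) * x.1) := by
  simp only [Lh, hh, ContinuousMap.smul_apply, AA_exp_apply, ContinuousMap.sub_apply, kap1,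
    ContinuousMap.coe_mk, ContinuousMap.one_apply, smul_eq_mul, mul_one]
  congr 3; ring
theorem Ls_apply (j x) (k : KK) : B.Ls j x k = B.hs j ((k.2 : ℝ) * x.2) := by
  simp only [Ls, hs, ContinuousMap.smul_apply, AA_exp_apply, ContinuousMap.sub_apply, kap2,
    ContinuousMap.coe_mk, ContinuousMap.one_apply, smul_eq_mul, mul_one]
  congr 3; ring
theorem Ld_apply (j x) (k : KK) : B.Ld j x k =
    1 + B.hh j ((k.1 : ℝ) * x.1) * B.hs j ((k.2 : ℝ) * x.2) := by
  simp [Ld, Lh_apply, Ls_apply]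

/-- the domain -/
def W : Set (ℂ × ℂ) := {x | ‖x.1‖ < B.R ∧ ‖x.2‖ < B.R ∧
  (∀ j, ∀ k : KK, 1 / 4 < ‖B.Ld j x k‖) ∧
  ∀ i j, i ≠ j → ((star (B.pt i) * x.1).re < B.R * (1 - B.c) ∨
    (B.pt j * x.2).re < B.R * (1 - B.c))}

theorem Lh_smooth (j) : ContDiff ℂ inf (B.Lh j) := by
  unfold Lh
  refine (AA_exp_smooth.comp ?_).const_smul _
  refine ContDiff.sub (ContDiff.fun_smul ?_ contDiff_const) contDiff_const
  exact contDiff_const.mul contDiff_fst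
theorem Ls_smooth (j) : ContDiff ℂ inf (B.Ls j) := by
  unfold Ls
  refine (AA_exp_smooth.comp ?_).const_smul _
  refine ContDiff.sub (ContDiff.fun_smul ?_ contDiff_const) contDiff_const
  exact contDiff_const.mul contDiff_snd
theorem Ld_smooth (j) : ContDiff ℂ inf (B.Ld j) :=
  contDiff_const.add ((B.Lh_smooth j).mul (B.Ls_smooth j))

theorem W_open : IsOpen B.W := by
  have e : B.W = {x | ‖x.1‖ < B.R} ∩ ({x | ‖x.2‖ < B.R} ∩
    ((⋂ j, (B.Ld j) ⁻¹' {f : AA | Set.MapsTo f Set.univ {w : ℂ | 1 / 4 < ‖w‖}}) ∩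
      ⋂ i, ⋂ j, ⋂ _ : i ≠ j, ({x | (star (B.pt i) * x.1).re < B.R * (1 - B.c)} ∪
        {x | (B.pt j * x.2).re < B.R * (1 - B.c)}))) := by
    ext x; simp [W, Set.MapsTo]
  rw [e]
  refine (isOpen_lt (by fun_prop) (by fun_prop)).inter
    ((isOpen_lt (by fun_prop) (by fun_prop)).inter (IsOpen.inter ?_ ?_))
  · refine isOpen_iInter_of_finite fun j => IsOpen.preimage (B.Ld_smooth j).continuous ?_
    exact ContinuousMap.isOpen_setOfPred_mapsTo isCompact_univ
      (isOpen_lt continuous_const continuous_norm)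
  · refine isOpen_iInter_of_finite fun i => isOpen_iInter_of_finite fun j =>
      isOpen_iInter_of_finite fun _ => IsOpen.union ?_ ?_
    · exact isOpen_lt (Complex.continuous_re.comp (by fun_prop)) continuous_const
    · exact isOpen_lt (Complex.continuous_re.comp (by fun_prop)) continuous_const

theorem lt_aux {s a r : ℝ} (hs : s ∈ Set.Icc (0:ℝ) 1) (hr : 0 < r) (h : a < r) : s * a < r := by
  rcases le_or_gt a 0 with ha | ha
  · nlinarith [mul_nonneg hs.1 (neg_nonneg.2 ha)]
  · nlinarith [hs.2]

theorem W_star (x) (hx : x ∈ B.W) (s : ℝ) (hs : s ∈ Set.Icc (0:ℝ) 1) (t : ℝ)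
    (ht : t ∈ Set.Icc (0:ℝ) 1) : ((s : ℂ) * x.1, (t : ℂ) * x.2) ∈ B.W := by
  obtain ⟨h1, h2, h3, h4⟩ := hx
  have hR := B.R_pos
  have hRc : 0 < B.R * (1 - B.c) := mul_pos hR (by have := B.hc2; linarith)
  refine ⟨?_, ?_, ?_, ?_⟩
  · simp only [norm_mul, Complex.norm_real, Real.norm_of_nonneg hs.1]
    exact lt_aux hs hR h1
  · simp only [norm_mul, Complex.norm_real, Real.norm_of_nonneg ht.1]
    exact lt_aux ht hR h2
  · intro j k
    have := h3 j (k.1 * ⟨s, hs⟩, k.2 * ⟨t, ht⟩)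
    rw [Ld_apply] at this ⊢
    simpa [mul_assoc] using this
  · intro i j hij
    have e1 : star (B.pt i) * ((s : ℂ) * x.1) = (s : ℝ) * (star (B.pt i) * x.1) := by ring
    have e2 : (B.pt j) * ((t : ℂ) * x.2) = (t : ℝ) * (B.pt j * x.2) := by ring
    simp only [e1, e2, Complex.re_ofReal_mul]
    exact (h4 i j hij).imp (lt_aux hs hRc) (lt_aux ht hRc)

theorem Ld_ne {x} (hx : x ∈ B.W) (j) (k : KK) : B.Ld j x k ≠ 0 := by
  have := hx.2.2.1 j k
  rw [← norm_pos_iff]; linarith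

theorem Lc_apply {x} (hx : x ∈ B.W) (j) (k : KK) :
    B.Lc j x k = B.cc j ((k.1 : ℝ) * x.1) ((k.2 : ℝ) * x.2) := by
  rw [Lc, AA_inv_apply _ (B.Ld_ne hx j), Ld_apply, cc]
theorem LD1_apply {x} (hx : x ∈ B.W) (j i) (k : KK) :
    B.LD1 j x i k = B.D1j j ((k.1 : ℝ) * x.1) ((k.2 : ℝ) * x.2) i := by
  rw [LD1, Fr.fD1_apply, B.Lc_apply hx, Lh_apply, Ls_apply, D1j]
theorem LD2_apply {x} (hx : x ∈ B.W) (j i) (k : KK) :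
    B.LD2 j x i k = B.D2j j ((k.1 : ℝ) * x.1) ((k.2 : ℝ) * x.2) i := by
  rw [LD2, Fr.fD2_apply, B.Lc_apply hx, Lh_apply, Ls_apply, D2j]
theorem LEE_apply {x} (hx : x ∈ B.W) (i) (k : KK) :
    B.LEE x i k = B.EE ((k.1 : ℝ) * x.1) ((k.2 : ℝ) * x.2) i := by
  simp only [LEE, EE, Finset.sum_apply, ContinuousMap.coe_sum]
  refine Finset.sum_congr rfl fun m _ => Finset.sum_congr rfl fun n _ => ?_
  split_ifs
  · rfl
  · rw [bt_apply]; simp only [B.LD1_apply hx, B.LD2_apply hx]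
theorem Lc_smooth {x} (hx : x ∈ B.W) (j) : ContDiffAt ℂ inf (B.Lc j) x :=
  (AA_inv_smooth _ (B.Ld_ne hx j)).comp x (B.Ld_smooth j).contDiffAt
theorem LD1_smooth {x} (hx : x ∈ B.W) (j) : ContDiffAt ℂ inf (B.LD1 j) x :=
  Fr.fD1_smooth _ _ _ _ _ _ (B.Lh_smooth j).contDiffAt (B.Ls_smooth j).contDiffAt
    (B.Lc_smooth hx j)
theorem LD2_smooth {x} (hx : x ∈ B.W) (j) : ContDiffAt ℂ inf (B.LD2 j) x :=
  Fr.fD2_smooth _ _ _ _ _ _ (B.Lh_smooth j).contDiffAt (B.Ls_smooth j).contDiffAt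
    (B.Lc_smooth hx j)
theorem LEE_smooth {x} (hx : x ∈ B.W) : ContDiffAt ℂ inf B.LEE x := by
  unfold LEE
  refine ContDiffAt.sum fun m _ => ContDiffAt.sum fun n _ => ?_
  split_ifs
  · exact contDiffAt_const
  · exact bt_smooth (B.LD1_smooth hx m) (B.LD2_smooth hx n)

/-- the weight -/
def om : Wt where
  a s := B.K * B.Λ * Real.exp (-(B.Λ * (1 - s) / 2))
  A s := 2 * B.K * Real.exp (-(B.Λ * (1 - s) / 2))
  C := 2 * B.K
  a_cont := by fun_prop
  a_pos s := by have := B.K_pos; have := B.Λ_pos; positivity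
  a_mono s t h := by
    have := B.K_pos; have := B.Λ_pos
    dsimp only
    gcongr
  A_deriv s := by
    have : HasDerivAt (fun s : ℝ => -(B.Λ * (1 - s) / 2)) (B.Λ / 2) s := by
      refine ((((hasDerivAt_id s).const_sub 1).const_mul B.Λ).div_const 2).neg.congr_deriv ?_
      ring
    refine (this.exp.const_mul (2 * B.K)).congr_deriv ?_
    ring
  A_nonneg s := by have := B.K_pos; positivity
  A_le s hs := by
    have := B.K_pos
    have h : Real.exp (-(B.Λ * (1 - s) / 2)) ≤ 1 := by
      rw [Real.exp_le_one_iff]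
      have := mul_nonneg B.Λ_pos.le (sub_nonneg.2 hs)
      linarith
    nlinarith

theorem hh_norm (j z) : ‖B.hh j z‖ = B.M * Real.exp (B.lam * (star (B.pt j) * z).re - B.Λ) := by
  rw [hh, norm_mul, Complex.norm_exp, Complex.norm_real, Real.norm_of_nonneg B.M_pos.le]
  congr 2
  rw [mul_assoc, Complex.sub_re, Complex.re_ofReal_mul, Complex.ofReal_re]
theorem hs_norm (j z) : ‖B.hs j z‖ = B.M * Real.exp (B.lam * (B.pt j * z).re - B.Λ) := by
  rw [hs, norm_mul, Complex.norm_exp, Complex.norm_real, Real.norm_of_nonneg B.M_pos.le]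
  congr 2
  rw [mul_assoc, Complex.sub_re, Complex.re_ofReal_mul, Complex.ofReal_re]
end BD

namespace BD
variable (B : BD)

theorem re1 (j) (z : ℂ) : (star (B.pt j) * z).re ≤ ‖z‖ := by
  refine (Complex.re_le_norm _).trans ?_
  rw [norm_mul, norm_star, B.hpt, one_mul]
theorem re2 (j) (z : ℂ) : (B.pt j * z).re ≤ ‖z‖ := by
  refine (Complex.re_le_norm _).trans ?_
  rw [norm_mul, B.hpt, one_mul]

theorem hh_le (j) (z : ℂ) (s : ℝ) (hs : 0 ≤ s) (r : ℝ) (hz : (star (B.pt j) * z).re ≤ B.R * r) :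
    ‖B.hh j (s * z)‖ ≤ B.M * Real.exp (s * (B.Λ * r) - B.Λ) := by
  rw [hh_norm]
  have e1 : star (B.pt j) * ((s : ℂ) * z) = (s : ℝ) * (star (B.pt j) * z) := by ring
  rw [e1, Complex.re_ofReal_mul]
  have := B.M_pos
  refine mul_le_mul_of_nonneg_left (Real.exp_le_exp.2 (sub_le_sub_right ?_ _)) this.le
  calc B.lam * (s * (star (B.pt j) * z).re) = s * (B.lam * (star (B.pt j) * z).re) := by ring
    _ ≤ s * (B.lam * (B.R * r)) := by have := B.lam_pos; gcongr
    _ = _ := by rw [← mul_assoc B.lam, B.lam_R]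
theorem hs_le (j) (z : ℂ) (s : ℝ) (hs : 0 ≤ s) (r : ℝ) (hz : (B.pt j * z).re ≤ B.R * r) :
    ‖B.hs j (s * z)‖ ≤ B.M * Real.exp (s * (B.Λ * r) - B.Λ) := by
  rw [hs_norm]
  have e1 : B.pt j * ((s : ℂ) * z) = (s : ℝ) * (B.pt j * z) := by ring
  rw [e1, Complex.re_ofReal_mul]
  have := B.M_pos
  refine mul_le_mul_of_nonneg_left (Real.exp_le_exp.2 (sub_le_sub_right ?_ _)) this.le
  calc B.lam * (s * (B.pt j * z).re) = s * (B.lam * (B.pt j * z).re) := by ring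
    _ ≤ s * (B.lam * (B.R * r)) := by have := B.lam_pos; gcongr
    _ = _ := by rw [← mul_assoc B.lam, B.lam_R]

theorem cc_norm {x} (hx : x ∈ B.W) (s : ℝ) (hs : s ∈ Set.Icc (0:ℝ) 1) (t : ℝ)
    (ht : t ∈ Set.Icc (0:ℝ) 1) (j) : ‖B.cc j (s * x.1) (t * x.2)‖ ≤ 4 := by
  have := hx.2.2.1 j (⟨s, hs⟩, ⟨t, ht⟩)
  rw [Ld_apply] at this
  rw [cc, norm_inv, inv_le_comm₀ (by linarith) (by norm_num)]
  dsimp only at this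
  linarith

theorem hh_le1 {x} (hx : x ∈ B.W) (s : ℝ) (hs : s ∈ Set.Icc (0:ℝ) 1) (j) :
    ‖B.hh j (s * x.1)‖ ≤ B.M * Real.exp (s * (B.Λ * 1) - B.Λ) :=
  B.hh_le j _ s hs.1 1 (by rw [mul_one]; exact (B.re1 _ _).trans hx.1.le)
theorem hs_le1 {x} (hx : x ∈ B.W) (s : ℝ) (hs : s ∈ Set.Icc (0:ℝ) 1) (j) :
    ‖B.hs j (s * x.2)‖ ≤ B.M * Real.exp (s * (B.Λ * 1) - B.Λ) :=
  B.hs_le j _ s hs.1 1 (by rw [mul_one]; exact (B.re2 _ _).trans hx.2.1.le)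
theorem exp_le1 (s : ℝ) (hs : s ∈ Set.Icc (0:ℝ) 1) :
    B.M * Real.exp (s * (B.Λ * 1) - B.Λ) ≤ B.M := by
  have := B.M_pos
  have h : Real.exp (s * (B.Λ * 1) - B.Λ) ≤ 1 := by
    rw [Real.exp_le_one_iff]
    have := mul_nonneg B.Λ_pos.le (sub_nonneg.2 hs.2); linarith
  nlinarith

theorem D1j_norm {x} (hx : x ∈ B.W) (s : ℝ) (hs : s ∈ Set.Icc (0:ℝ) 1) (t : ℝ)
    (ht : t ∈ Set.Icc (0:ℝ) 1) (j i) :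
    ‖B.D1j j (s * x.1) (t * x.2) i‖ ≤ B.Q * B.Λ * ‖B.hh j (s * x.1)‖ := by
  refine (Fr.fD1_norm _ _ _ _ _ B.M ((B.hs_le1 hx t ht j).trans (B.exp_le1 t ht))
    (B.cc_norm hx s hs t ht j) i).trans ?_
  rw [norm_mul, norm_star, B.hpt, mul_one, Complex.norm_real, Real.norm_of_nonneg B.lam_pos.le]
  have := B.lam_le; have := B.Q_pos
  change B.Q * B.lam * _ ≤ _
  gcongr
theorem D2j_norm {x} (hx : x ∈ B.W) (s : ℝ) (hs : s ∈ Set.Icc (0:ℝ) 1) (t : ℝ)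
    (ht : t ∈ Set.Icc (0:ℝ) 1) (j i) :
    ‖B.D2j j (s * x.1) (t * x.2) i‖ ≤ B.Q * B.Λ * ‖B.hs j (t * x.2)‖ := by
  refine (Fr.fD2_norm _ _ _ _ _ B.M ((B.hh_le1 hx s hs j).trans (B.exp_le1 s hs))
    (B.cc_norm hx s hs t ht j) i).trans ?_
  rw [norm_mul, B.hpt, mul_one, Complex.norm_real, Real.norm_of_nonneg B.lam_pos.le]
  have := B.lam_le; have := B.Q_pos
  change B.Q * B.lam * _ ≤ _
  gcongr

theorem exp_half (s : ℝ) (hs : s ∈ Set.Icc (0:ℝ) 1) :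
    Real.exp (s * (B.Λ * 1) - B.Λ) ≤ Real.exp (-(B.Λ * (1 - s) / 2)) := by
  gcongr
  have := mul_nonneg B.Λ_pos.le (sub_nonneg.2 hs.2); linarith

theorem sum_le_K (f : Fin B.k → ℂ) (y : ℝ) (hy : 0 ≤ y)
    (h : ∀ j, ‖f j‖ ≤ B.Q * B.Λ * (B.M * y)) : ‖∑ j, f j‖ ≤ B.K * B.Λ * y := by
  refine (norm_sum_le_of_le _ fun j _ => h j).trans ?_
  have := B.M_pos; have := B.Q_pos; have := B.Λ_pos
  simp only [Finset.sum_const, Finset.card_univ, Fintype.card_fin, nsmul_eq_mul, K]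
  have : 0 ≤ B.Q * B.Λ * (B.M * y) := by positivity
  nlinarith

theorem D1_bd (x) (hx : x ∈ B.W) (s : ℝ) (hs : s ∈ Set.Icc (0:ℝ) 1) (t : ℝ)
    (ht : t ∈ Set.Icc (0:ℝ) 1) (i) : ‖B.D1 (s * x.1) (t * x.2) i‖ ≤ B.om.a s := by
  rw [D1, Finset.sum_apply]
  refine B.sum_le_K _ _ (Real.exp_nonneg _) fun j => (B.D1j_norm hx s hs t ht j i).trans ?_
  have := B.M_pos; have := B.Q_pos; have := B.Λ_pos
  gcongr
  refine (B.hh_le1 hx s hs j).trans ?_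
  exact mul_le_mul_of_nonneg_left (B.exp_half s hs) B.M_pos.le
theorem D2_bd (x) (hx : x ∈ B.W) (s : ℝ) (hs : s ∈ Set.Icc (0:ℝ) 1) (t : ℝ)
    (ht : t ∈ Set.Icc (0:ℝ) 1) (i) : ‖B.D2 (s * x.1) (t * x.2) i‖ ≤ B.om.a t := by
  rw [D2, Finset.sum_apply]
  refine B.sum_le_K _ _ (Real.exp_nonneg _) fun j => (B.D2j_norm hx s hs t ht j i).trans ?_
  have := B.M_pos; have := B.Q_pos; have := B.Λ_pos
  gcongr
  refine (B.hs_le1 hx t ht j).trans ?_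
  exact mul_le_mul_of_nonneg_left (B.exp_half t ht) B.M_pos.le

theorem prod_le {x} (hx : x ∈ B.W) (s : ℝ) (hs : s ∈ Set.Icc (0:ℝ) 1) (t : ℝ)
    (ht : t ∈ Set.Icc (0:ℝ) 1) (i j) (hij : i ≠ j) :
    ‖B.hh i (s * x.1)‖ * ‖B.hs j (t * x.2)‖ ≤ B.M ^ 2 * (Real.exp (-(B.c * B.Λ)) *
      (Real.exp (-(B.Λ * (1 - s) / 2)) * Real.exp (-(B.Λ * (1 - t) / 2)))) := by
  have hM := B.M_pos; have hc := B.hc; have hc2 := B.hc2; have hL := B.Λ_pos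
  have n1 := mul_nonneg B.Λ_pos.le (sub_nonneg.2 hs.2)
  have n2 := mul_nonneg B.Λ_pos.le (sub_nonneg.2 ht.2)
  have n3 := mul_nonneg n1 (sub_nonneg.2 hc2)
  have n4 := mul_nonneg n2 (sub_nonneg.2 hc2)
  rw [← Real.exp_add, ← Real.exp_add]
  rcases hx.2.2.2 i j hij with h | h
  · refine (mul_le_mul (B.hh_le i x.1 s hs.1 _ h.le) (B.hs_le1 hx t ht j) (norm_nonneg _)
      (by positivity)).trans ?_
    rw [mul_mul_mul_comm, ← Real.exp_add, ← sq]
    refine mul_le_mul_of_nonneg_left (Real.exp_le_exp.2 ?_) (by positivity)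
    nlinarith
  · refine (mul_le_mul (B.hh_le1 hx s hs i) (B.hs_le j x.2 t ht.1 _ h.le) (norm_nonneg _)
      (by positivity)).trans ?_
    rw [mul_mul_mul_comm, ← Real.exp_add, ← sq]
    refine mul_le_mul_of_nonneg_left (Real.exp_le_exp.2 ?_) (by positivity)
    nlinarith

theorem bt_comp_norm (x y : VV) (a b : ℝ) (hx : ∀ i, ‖x i‖ ≤ a) (hy : ∀ i, ‖y i‖ ≤ b) (i) :
    ‖bt x y i‖ ≤ 2 * (a * b) := by
  have ha : 0 ≤ a := (norm_nonneg _).trans (hx 0)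
  simp only [bt, norm_smul, norm_neg, Complex.norm_I, one_mul]
  refine (norm_sub_le _ _).trans ?_
  rw [norm_mul, norm_mul, two_mul]
  exact add_le_add (mul_le_mul (hx _) (hy _) (norm_nonneg _) ha)
    (mul_le_mul (hx _) (hy _) (norm_nonneg _) ha)

theorem E_bd (x) (hx : x ∈ B.W) (s : ℝ) (hs : s ∈ Set.Icc (0:ℝ) 1) (t : ℝ)
    (ht : t ∈ Set.Icc (0:ℝ) 1) (i) :
    ‖B.EE (s * x.1) (t * x.2) i‖ ≤ 2 * Real.exp (-(B.c * B.Λ)) * (B.om.a s * B.om.a t) := by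
  have hM := B.M_pos; have := B.Q_pos; have hL := B.Λ_pos
  set y := Real.exp (-(B.c * B.Λ)) *
      (Real.exp (-(B.Λ * (1 - s) / 2)) * Real.exp (-(B.Λ * (1 - t) / 2))) with hy
  have hy0 : 0 ≤ y := by positivity
  have key : ∀ m n, ‖(if m = n then 0 else bt (B.D1j m (s * x.1) (t * x.2))
      (B.D2j n (s * x.1) (t * x.2)) : VV) i‖ ≤ 2 * ((B.Q * B.Λ) ^ 2 * (B.M ^ 2 * y)) := by
    intro m n
    split_ifs with h
    · simp; positivity
    · refine (bt_comp_norm _ _ _ _ (B.D1j_norm hx s hs t ht m) (B.D2j_norm hx s hs t ht n) i).trans ?_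
      have := B.prod_le hx s hs t ht m n h
      rw [mul_mul_mul_comm, ← sq]
      gcongr
  simp only [EE, Finset.sum_apply]
  refine (norm_sum_le_of_le _ fun m _ => norm_sum_le_of_le _ fun n _ => key m n).trans ?_
  simp only [Finset.sum_const, Finset.card_univ, Fintype.card_fin, nsmul_eq_mul]
  have e : 2 * Real.exp (-(B.c * B.Λ)) * (B.om.a s * B.om.a t) =
    ((B.k + 1) * (B.k + 1)) * (2 * ((B.Q * B.Λ) ^ 2 * (B.M ^ 2 * y))) := by
    simp only [om, K, hy]; ring
  rw [e, ← mul_assoc]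
  gcongr <;> linarith

/-- The Goursat data. -/
def gd : GD where
  ω := B.om
  W := B.W
  e0 := 2 * Real.exp (-(B.c * B.Λ))
  D1 := B.D1
  D2 := B.D2
  E := B.EE
  L1 x := ∑ j, B.LD1 j x
  L2 x := ∑ j, B.LD2 j x
  LE := B.LEE
  W_open := B.W_open
  W_star := B.W_star
  W_bd x hx := ⟨hx.1.le.trans B.R_le, hx.2.1.le.trans B.R_le⟩
  L1_smooth x hx := (ContDiffAt.sum fun j _ => B.LD1_smooth hx j).contDiffWithinAt
  L2_smooth x hx := (ContDiffAt.sum fun j _ => B.LD2_smooth hx j).contDiffWithinAt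
  LE_smooth x hx := (B.LEE_smooth hx).contDiffWithinAt
  L1_eq x hx i k := by
    simp only [D1, Finset.sum_apply, ContinuousMap.coe_sum]
    exact Finset.sum_congr rfl fun j _ => B.LD1_apply hx j i k
  L2_eq x hx i k := by
    simp only [D2, Finset.sum_apply, ContinuousMap.coe_sum]
    exact Finset.sum_congr rfl fun j _ => B.LD2_apply hx j i k
  LE_eq x hx i k := B.LEE_apply hx i k
  D1_bd := B.D1_bd
  D2_bd := B.D2_bd
  E_bd := B.E_bd
  e0_pos := by positivity
  e0_small := B.hsmall
  conj1 := B.conj1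
  conjE := B.conjE

theorem hh_deriv (j z) : HasDerivAt (B.hh j) (B.lam * star (B.pt j) * B.hh j z) z := by
  unfold hh
  refine (((((hasDerivAt_id z).const_mul (B.lam * star (B.pt j))).sub_const (B.Λ : ℂ)).cexp).const_mul
    (B.M : ℂ)).congr_deriv ?_
  simp; ring
theorem hs_deriv (j z) : HasDerivAt (B.hs j) (B.lam * B.pt j * B.hs j z) z := by
  unfold hs
  refine (((((hasDerivAt_id z).const_mul (B.lam * B.pt j)).sub_const (B.Λ : ℂ)).cexp).const_mul
    (B.M : ℂ)).congr_deriv ?_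
  simp; ring

theorem den_ne {x} (hx : x ∈ B.W) (j) : 1 + B.hh j x.1 * B.hs j x.2 ≠ 0 := by
  have := B.Ld_ne hx j (1, 1)
  rw [Ld_apply] at this
  simpa using this

theorem U_z (x) (hx : x ∈ B.W) (i) :
    HasDerivAt (fun z => B.UU z x.2 i) (B.D1 x.1 x.2 i) x.1 := by
  simp only [UU, D1, Finset.sum_apply]
  exact HasDerivAt.fun_sum fun j _ => Fr.fB_deriv1 _ _ _ _ _ (B.hh_deriv j x.1) (B.den_ne hx j) i
theorem U_w (x) (hx : x ∈ B.W) (i) :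
    HasDerivAt (fun w => B.UU x.1 w i) (B.D2 x.1 x.2 i) x.2 := by
  simp only [UU, D2, Finset.sum_apply]
  exact HasDerivAt.fun_sum fun j _ => Fr.fB_deriv2 _ _ _ _ _ (B.hs_deriv j x.2) (B.den_ne hx j) i
def Gm (a b : ℂ) : VV := ∑ j, bt (B.D1j j a b) (B.D2j j a b)
theorem D1_w (x) (hx : x ∈ B.W) (i) :
    HasDerivAt (fun w => B.D1 x.1 w i) (B.Gm x.1 x.2 i) x.2 := by
  simp only [D1, Gm, Finset.sum_apply]
  exact HasDerivAt.fun_sum fun j _ => Fr.fD1_deriv2 _ _ _ _ _ _ (B.hs_deriv j x.2) (B.den_ne hx j) i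
theorem D2_z (x) (hx : x ∈ B.W) (i) :
    HasDerivAt (fun z => B.D2 z x.2 i) (B.Gm x.1 x.2 i) x.1 := by
  simp only [D2, Gm, Finset.sum_apply]
  exact HasDerivAt.fun_sum fun j _ => Fr.fD2_deriv1 _ _ _ _ _ _ (B.hh_deriv j x.1) (B.den_ne hx j) i

theorem bt_sum_left {ι : Type*} (s : Finset ι) (f : ι → VV) (y : VV) :
    bt (∑ j ∈ s, f j) y = ∑ j ∈ s, bt (f j) y := by
  classical
  induction s using Finset.induction_on with
  | empty => simp [bt_zero_left]
  | insert a s ha ih => rw [Finset.sum_insert ha, Finset.sum_insert ha, bt_add_left, ih]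
theorem bt_sum_right {ι : Type*} (s : Finset ι) (f : ι → VV) (y : VV) :
    bt y (∑ j ∈ s, f j) = ∑ j ∈ s, bt y (f j) := by
  classical
  induction s using Finset.induction_on with
  | empty => simp [bt_zero_right]
  | insert a s ha ih => rw [Finset.sum_insert ha, Finset.sum_insert ha, bt_add_right, ih]

theorem Gm_add_EE (a b) : B.Gm a b + B.EE a b = bt (B.D1 a b) (B.D2 a b) := by
  rw [D1, bt_sum_left, Gm, EE, ← Finset.sum_add_distrib]
  refine Finset.sum_congr rfl fun i _ => ?_
  rw [D2, bt_sum_right]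
  have : bt (B.D1j i a b) (B.D2j i a b) =
      ∑ j, if i = j then bt (B.D1j i a b) (B.D2j j a b) else 0 := by simp
  rw [this, ← Finset.sum_add_distrib]
  refine Finset.sum_congr rfl fun j _ => ?_
  split_ifs <;> simp

theorem UU_smooth (i) : ContDiffOn ℂ inf (fun x : ℂ × ℂ => B.UU x.1 x.2 i) B.W := by
  intro x hx
  simp only [UU, Finset.sum_apply]
  refine (ContDiffAt.sum fun j _ => ?_).contDiffWithinAt
  have h1 : ContDiff ℂ inf (fun x : ℂ × ℂ => B.hh j x.1) := by unfold hh; fun_prop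
  have h2 : ContDiff ℂ inf (fun x : ℂ × ℂ => B.hs j x.2) := by unfold hs; fun_prop
  have h3 : ContDiffAt ℂ inf (fun x : ℂ × ℂ => B.cc j x.1 x.2) x :=
    ContDiffAt.inv (contDiff_const.add (h1.mul h2)).contDiffAt (B.den_ne hx j)
  simp only [Uj, Fr.fB, smul_eq_mul]
  have h1 := h1.contDiffAt (x := x)
  have h2 := h2.contDiffAt (x := x)
  exact h3.mul (((contDiffAt_const.mul h1).add (contDiffAt_const.mul h2)).add
    (contDiffAt_const.mul (h1.mul h2)))

/-- The full solution. -/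
def Y (x : ℂ × ℂ) : VV := B.UU x.1 x.2 + B.gd.v x
def sol : ℂ → R3 := reF B.Y

theorem sol_spec (z : ℂ) (hz : (z, star z) ∈ B.W) :
    ContDiffAt ℝ inf B.sol z ∧
    lap B.sol z = (2 : ℝ) • cross (pdx B.sol z) (pdy B.sol z) := by
  refine real_conv B.W B.W_open B.Y (fun x => B.D1 x.1 x.2 + B.gd.p x)
    (fun x => B.D2 x.1 x.2 + B.gd.q x) (fun x => B.Gm x.1 x.2 + B.gd.g x)
    (fun i => (B.UU_smooth i).add (B.gd.v_smooth i))
    (fun i => (B.gd.D1_smooth i).add (B.gd.p_smooth i))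
    (fun i => (B.gd.D2_smooth i).add (B.gd.q_smooth i))
    (fun x hx i => (B.U_z x hx i).add (B.gd.v_z x hx i))
    (fun x hx i => (B.U_w x hx i).add (B.gd.v_w x hx i))
    (fun x hx i => (B.D1_w x hx i).add (B.gd.p_w x hx i))
    (fun x hx i => (B.D2_z x hx i).add (B.gd.q_z x hx i)) ?_ ?_ z hz
  · intro x hx
    have : B.gd.g x = B.EE x.1 x.2 + bt (B.D1 x.1 x.2) (B.gd.q x) + bt (B.gd.p x) (B.D2 x.1 x.2)
      + bt (B.gd.p x) (B.gd.q x) := rfl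
    rw [this, bt_add_left, bt_add_right, bt_add_right, ← Gm_add_EE]
    abel
  · intro z hz i
    simp only [Pi.add_apply, star_add]
    rw [B.gd.pq_conj z hz i]
    congr 1
    have := B.conj1 z (star z) i
    rw [star_star] at this
    rw [← this, star_star]

theorem v_small (x) (hx : x ∈ B.W) (i) :
    ‖B.gd.v x i‖ ≤ Real.exp (64 * (2 * B.K)) * (2 * Real.exp (-(B.c * B.Λ))) :=
  B.gd.v_norm x hx i
end BD

namespace BD
variable (B : BD)

theorem sep_or (z : ℂ) (hz : ‖z‖ ≤ 1) (i j) (hij : i ≠ j) :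
    (star (B.pt i) * z).re + (star (B.pt j) * z).re ≤ 2 - 2 * B.c := by
  rw [← Complex.add_re, ← add_mul, ← star_add]
  refine (Complex.re_le_norm _).trans ?_
  rw [norm_mul, norm_star]
  have := B.hsep i j hij
  nlinarith [norm_nonneg (B.pt i + B.pt j), norm_nonneg z]

theorem re_star (j) (z : ℂ) : (B.pt j * star z).re = (star (B.pt j) * z).re := by
  simp [Complex.mul_re]

theorem phase (l ell s t X Y : ℝ) (hl : 0 < l) (he : 1 ≤ ell) (hle : 2 * ell ^ 3 ≤ l)
    (hs : s ∈ Set.Icc (0:ℝ) 1) (ht : t ∈ Set.Icc (0:ℝ) 1) (hXY : X ^ 2 + Y ^ 2 ≤ 1)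
    (h : l * (2 - (s + t) * X) ≤ ell) : |l * (s - t) * Y| ≤ 1 := by
  obtain ⟨hs0, hs1⟩ := hs; obtain ⟨ht0, ht1⟩ := ht
  have hX1 : X ≤ 1 := by nlinarith [sq_nonneg Y, sq_nonneg (X - 1)]
  have hle2 : ell ≤ l := by nlinarith [sq_nonneg ell, mul_nonneg (sq_nonneg ell) (sub_nonneg.2 he)]
  have hX0 : 0 ≤ X := by
    by_contra hX
    push Not at hX
    have : (s + t) * X ≤ 0 := mul_nonpos_of_nonneg_of_nonpos (by linarith) hX.le
    nlinarith
  have h1 : l * (2 - (s + t)) ≤ ell := by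
    refine le_trans ?_ h
    gcongr
    nlinarith
  have h2 : l * (2 - 2 * X) ≤ ell := by
    refine le_trans ?_ h
    gcongr
    linarith
  have h3 : (l * (s - t)) ^ 2 ≤ ell ^ 2 := by
    rw [sq_le_sq, abs_of_nonneg (by linarith : 0 ≤ ell), abs_le]
    constructor
    · nlinarith
    · nlinarith
  have h4 : l * Y ^ 2 ≤ ell := by nlinarith [mul_nonneg hl.le (sq_nonneg (1 - X)), mul_le_mul_of_nonneg_left hXY hl.le]
  rw [← sq_le_one_iff_abs_le_one]
  have h5 : l * (l * (s - t) * Y) ^ 2 ≤ ell ^ 3 := by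
    calc l * (l * (s - t) * Y) ^ 2 = (l * (s - t)) ^ 2 * (l * Y ^ 2) := by ring
      _ ≤ ell ^ 2 * ell := by gcongr
      _ = _ := by ring
  by_contra hc
  push Not at hc
  nlinarith [pow_pos (by linarith : 0 < ell) 3]

theorem ell_ge : 1 ≤ Real.log (2 * B.M ^ 2) := by
  have := B.hM
  rw [Real.le_log_iff_exp_le (by positivity)]
  have := Real.exp_one_lt_d9
  nlinarith

theorem diag (z : ℂ) (hz : ‖z‖ ≤ 1) : (z, star z) ∈ B.W := by
  have hR := B.R_gt
  refine ⟨hz.trans_lt hR, by simpa only [norm_star] using hz.trans_lt hR, ?_, ?_⟩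
  · intro j k
    rw [Ld_apply]
    dsimp only
    obtain ⟨⟨s, hs⟩, ⟨t, ht⟩⟩ := k
    dsimp only
    set q := star (B.pt j) * z with hq
    have hqn : ‖q‖ ≤ 1 := by rw [hq, norm_mul, norm_star, B.hpt, one_mul]; exact hz
    have hq2 : q.re ^ 2 + q.im ^ 2 ≤ 1 := by
      have : ‖q‖ ^ 2 = q.re ^ 2 + q.im ^ 2 := by rw [Complex.sq_norm, Complex.normSq_apply]; ring
      rw [← this]; exact pow_le_one₀ (norm_nonneg _) hqn
    have hH : B.hh j (s * z) * B.hs j (t * star z) =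
        ((B.M ^ 2 : ℝ) : ℂ) * Complex.exp (B.lam * (s * q + t * star q) - 2 * B.Λ) := by
      rw [hh, BD.hs, mul_mul_mul_comm, ← Complex.exp_add, hq]
      push_cast
      rw [sq]
      congr 2
      simp only [star_mul', star_star]
      ring
    set w : ℂ := B.lam * (s * q + t * star q) - 2 * B.Λ with hw
    have hre : w.re = B.lam * ((s + t) * q.re) - 2 * B.Λ := by
      have e2 : (2 * (B.Λ : ℂ)).re = 2 * B.Λ := by simp
      simp only [hw, Complex.sub_re, Complex.re_ofReal_mul, Complex.add_re, Complex.star_def, Complex.conj_re, e2]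
      ring
    have him : w.im = B.lam * (s - t) * q.im := by
      simp only [hw, Complex.sub_im, Complex.im_ofReal_mul, Complex.add_im, Complex.star_def, Complex.conj_im]
      have e2 : (2 * (B.Λ : ℂ)).im = 0 := by simp
      rw [e2]
      ring
    have hM := B.M_pos
    rw [hH]
    have hn : ‖((B.M ^ 2 : ℝ) : ℂ) * Complex.exp w‖ = B.M ^ 2 * Real.exp w.re := by
      rw [norm_mul, Complex.norm_exp, Complex.norm_real, Real.norm_of_nonneg (by positivity)]
    rcases lt_or_ge (B.M ^ 2 * Real.exp w.re) (1 / 2) with h | h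
    · have := norm_sub_norm_le (1 : ℂ) (-(((B.M ^ 2 : ℝ) : ℂ) * Complex.exp w))
      rw [norm_neg, hn, norm_one, sub_neg_eq_add] at this
      linarith
    · have h1 : -Real.log (2 * B.M ^ 2) ≤ w.re := by
        rw [← Real.log_inv, Real.log_le_iff_le_exp (by positivity), inv_le_iff_one_le_mul₀ (by positivity)]
        linarith
      have h2 := phase B.lam (Real.log (2 * B.M ^ 2)) s t q.re q.im B.lam_pos B.ell_ge
        B.hphase hs ht hq2 (by have := B.lam_le; linarith)
      rw [← him] at h2
      have h3 : 0 ≤ Real.cos w.im := Real.cos_nonneg_of_mem_Icc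
        ⟨by have := Real.pi_gt_three; have := (abs_le.1 h2).1; linarith,
         by have := Real.pi_gt_three; have := (abs_le.1 h2).2; linarith⟩
      have h4 : 0 ≤ (((B.M ^ 2 : ℝ) : ℂ) * Complex.exp w).re := by
        rw [Complex.re_ofReal_mul, Complex.exp_re]; positivity
      have h5 := Complex.re_le_norm (1 + ((B.M ^ 2 : ℝ) : ℂ) * Complex.exp w)
      rw [Complex.add_re, Complex.one_re] at h5
      linarith
  · intro i j hij
    have h := B.sep_or z hz i j hij
    have hc : B.R * (1 - B.c) > 1 - B.c := by have := B.hc2; nlinarith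
    dsimp only
    rw [B.re_star]
    by_contra hcon
    push Not at hcon
    linarith
end BD

namespace Fr
variable (F : Fr)
/-- the center in `ℝ³` -/
def cen : R3 := WithLp.toLp 2 F.v
/-- the real bubble -/
def bub (ζ : ℂ) : R3 := WithLp.toLp 2 fun i => (F.fB ζ (star ζ) (1 + ζ * star ζ)⁻¹ i).re

theorem bub_apply (ζ : ℂ) (i) : F.bub ζ i =
    (2 * (F.e1 i * ζ.re + F.e2 i * ζ.im) + 2 * F.v i * (ζ.re ^ 2 + ζ.im ^ 2)) /
      (1 + (ζ.re ^ 2 + ζ.im ^ 2)) := by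
  have h1 : ζ * star ζ = ((ζ.re ^ 2 + ζ.im ^ 2 : ℝ) : ℂ) := by
    rw [Complex.star_def, Complex.mul_conj, Complex.normSq_apply]; push_cast; ring
  have h2 : F.fB ζ (star ζ) (1 + ζ * star ζ)⁻¹ i =
      (((2 * (F.e1 i * ζ.re + F.e2 i * ζ.im) + 2 * F.v i * (ζ.re ^ 2 + ζ.im ^ 2)) /
      (1 + (ζ.re ^ 2 + ζ.im ^ 2)) : ℝ) : ℂ) := by
    rw [fB, h1]
    have h3 : F.nu i • ζ + F.nb i • star ζ = ((2 * (F.e1 i * ζ.re + F.e2 i * ζ.im) : ℝ) : ℂ) := by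
      apply Complex.ext <;> simp [nu, nb] <;> ring
    rw [h3, vv]
    push_cast
    rw [div_eq_mul_inv, mul_comm, smul_eq_mul]
  change (F.fB ζ (star ζ) (1 + ζ * star ζ)⁻¹ i).re = _
  rw [h2, Complex.ofReal_re]

theorem R3_normsq (x : R3) : ‖x‖ ^ 2 = x 0 ^ 2 + x 1 ^ 2 + x 2 ^ 2 := by
  rw [EuclideanSpace.norm_sq_eq, Fin.sum_univ_three]; simp

theorem bub_sphere (ζ : ℂ) : F.bub ζ ∈ sphere F.cen 1 := by
  rw [mem_sphere, dist_eq_norm, ← sq_eq_sq₀ (norm_nonneg _) zero_le_one, R3_normsq]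
  have hp : 1 + (ζ.re ^ 2 + ζ.im ^ 2) ≠ 0 := by positivity
  simp only [PiLp.sub_apply, bub_apply, cen]
  have h1 := F.n1; have h2 := F.n2; have h3 := F.n3; have h4 := F.o12; have h5 := F.o13
  have h6 := F.o23
  field_simp
  generalize ζ.re = x at *; generalize ζ.im = y at *
  linear_combination (4 * x ^ 2) * h1 + (4 * y ^ 2) * h2 + (x ^ 2 + y ^ 2 - 1) ^ 2 * h3
    + 8 * x * y * h4 + 4 * x * (x ^ 2 + y ^ 2 - 1) * h5 + 4 * y * (x ^ 2 + y ^ 2 - 1) * h6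
theorem bub_norm (ζ : ℂ) : ‖F.bub ζ‖ ≤ 2 * ‖ζ‖ := by
  rw [← sq_le_sq₀ (norm_nonneg _) (by positivity), R3_normsq, mul_pow, Complex.sq_norm,
    Complex.normSq_apply]
  have hp : 0 < 1 + (ζ.re ^ 2 + ζ.im ^ 2) := by positivity
  have e : F.bub ζ 0 ^ 2 + F.bub ζ 1 ^ 2 + F.bub ζ 2 ^ 2 =
      4 * (ζ.re ^ 2 + ζ.im ^ 2) / (1 + (ζ.re ^ 2 + ζ.im ^ 2)) := by
    simp only [bub_apply]
    have h1 := F.n1; have h2 := F.n2; have h3 := F.n3; have h4 := F.o12; have h5 := F.o13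
    have h6 := F.o23
    field_simp
    generalize ζ.re = x at *; generalize ζ.im = y at *
    linear_combination (4 * x ^ 2) * h1 + (4 * y ^ 2) * h2 + 4 * (x ^ 2 + y ^ 2) ^ 2 * h3
      + 8 * x * y * h4 + 8 * x * (x ^ 2 + y ^ 2) * h5 + 8 * y * (x ^ 2 + y ^ 2) * h6
  rw [e, div_le_iff₀ hp]
  nlinarith [sq_nonneg (ζ.re ^ 2 + ζ.im ^ 2)]
theorem bub_far (ζ : ℂ) : ‖F.bub ζ - (2 : ℝ) • F.cen‖ * ‖ζ‖ ≤ 2 := by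
  rw [← sq_le_sq₀ (by positivity) (by positivity), mul_pow, R3_normsq, Complex.sq_norm,
    Complex.normSq_apply]
  have hp : 0 < 1 + (ζ.re ^ 2 + ζ.im ^ 2) := by positivity
  have e : (F.bub ζ - (2 : ℝ) • F.cen) 0 ^ 2 + (F.bub ζ - (2 : ℝ) • F.cen) 1 ^ 2
    + (F.bub ζ - (2 : ℝ) • F.cen) 2 ^ 2 = 4 / (1 + (ζ.re ^ 2 + ζ.im ^ 2)) := by
    simp only [PiLp.sub_apply, PiLp.smul_apply, bub_apply, cen, smul_eq_mul]
    have h1 := F.n1; have h2 := F.n2; have h3 := F.n3; have h4 := F.o12; have h5 := F.o13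
    have h6 := F.o23
    field_simp
    generalize ζ.re = x at *; generalize ζ.im = y at *
    linear_combination (4 * x ^ 2) * h1 + (4 * y ^ 2) * h2 + 4 * h3
      + 8 * x * y * h4 - 8 * x * h5 - 8 * y * h6
  rw [e, div_mul_eq_mul_div, div_le_iff₀ hp]
  nlinarith

theorem complete (i j : Fin 3) : F.e1 i * F.e1 j + F.e2 i * F.e2 j + F.v i * F.v j =
    if i = j then 1 else 0 := by
  have h1 := F.n1; have h2 := F.n2; have h3 := F.n3; have h4 := F.o12; have h5 := F.o13
  have h6 := F.o23
  let P : Matrix (Fin 3) (Fin 3) ℝ := Matrix.of ![F.e1, F.e2, F.v]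
  have hP : P * P.transpose = 1 := by
    ext a b
    fin_cases a <;> fin_cases b <;>
      simp [P, Matrix.mul_apply, Fin.sum_univ_three] <;> linarith
  have hP2 := mul_eq_one_comm.1 hP
  have := congrFun (congrFun hP2 i) j
  rw [Matrix.mul_apply, Fin.sum_univ_three, Matrix.one_apply] at this
  simpa [P] using this

theorem bub_surj (y : R3) (hy : y ∈ sphere F.cen 1) (hne : y ≠ (2 : ℝ) • F.cen) :
    ∃ ζ, F.bub ζ = y := by
  rw [mem_sphere, dist_eq_norm, ← sq_eq_sq₀ (norm_nonneg _) zero_le_one, R3_normsq] at hy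
  simp only [PiLp.sub_apply, cen] at hy
  set n0 := y 0 - F.v 0
  set n1 := y 1 - F.v 1
  set n2 := y 2 - F.v 2
  set α := n0 * F.e1 0 + n1 * F.e1 1 + n2 * F.e1 2 with hα
  set β := n0 * F.e2 0 + n1 * F.e2 1 + n2 * F.e2 2 with hβ
  set γ := n0 * F.v 0 + n1 * F.v 1 + n2 * F.v 2 with hγ
  have hn : ∀ i, y i - F.v i = α * F.e1 i + β * F.e2 i + γ * F.v i := by
    intro i
    have e0 := F.complete 0 i
    have e1 := F.complete 1 i
    have e2 := F.complete 2 i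
    have : α * F.e1 i + β * F.e2 i + γ * F.v i = n0 * (if 0 = i then 1 else 0) +
      n1 * (if 1 = i then 1 else 0) + n2 * (if 2 = i then 1 else 0) := by
      rw [← e0, ← e1, ← e2, hα, hβ, hγ]; ring
    rw [this]
    fin_cases i <;> simp [n0, n1, n2]
  have hu : α ^ 2 + β ^ 2 + γ ^ 2 = 1 := by
    have h0 := hn 0; have h1 := hn 1; have h2 := hn 2
    have : α ^ 2 + β ^ 2 + γ ^ 2 = (y 0 - F.v 0) * n0 + (y 1 - F.v 1) * n1 + (y 2 - F.v 2) * n2 := by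
      rw [h0, h1, h2]
      linear_combination α * hα + β * hβ + γ * hγ
    rw [this]
    linarith
  have hγ1 : γ ≠ 1 := by
    intro h
    apply hne
    rw [h] at hu
    have ha : α = 0 := by nlinarith [sq_nonneg α, sq_nonneg β]
    have hb : β = 0 := by nlinarith [sq_nonneg α, sq_nonneg β]
    ext i
    have := hn i
    rw [ha, hb, h] at this
    simp only [PiLp.smul_apply, cen, smul_eq_mul]
    linarith
  have h1γ : 1 - γ ≠ 0 := sub_ne_zero.2 (Ne.symm hγ1)
  refine ⟨⟨α / (1 - γ), β / (1 - γ)⟩, ?_⟩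
  ext i
  rw [bub_apply]
  have hyi : y i = α * F.e1 i + β * F.e2 i + γ * F.v i + F.v i := by linarith [hn i]
  rw [hyi]
  dsimp only
  have hr : (α / (1 - γ)) ^ 2 + (β / (1 - γ)) ^ 2 = (1 + γ) / (1 - γ) := by
    field_simp; linear_combination hu
  rw [hr]
  have h2 : 1 + (1 + γ) / (1 - γ) = 2 / (1 - γ) := by field_simp; ring
  rw [h2]
  field_simp
  ring

theorem bub_approx (y : R3) (hy : y ∈ sphere F.cen 1) (δ : ℝ) (h0 : 0 < δ) (h1 : δ < 1) :
    ∃ ζ : ℂ, δ ≤ ‖ζ‖ ∧ ‖ζ‖ ≤ δ⁻¹ ∧ ‖F.bub ζ - y‖ ≤ 4 * δ := by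
  have hd : δ ≤ δ⁻¹ := by
    rw [le_inv_comm₀ h0 h0]
    exact h1.le.trans ((one_le_inv₀ h0).2 h1.le)
  have nd : ‖(δ : ℂ)‖ = δ := by rw [Complex.norm_real, Real.norm_of_nonneg h0.le]
  have ndi : ‖((δ⁻¹ : ℝ) : ℂ)‖ = δ⁻¹ := by
    rw [Complex.norm_real, Real.norm_of_nonneg (by positivity)]
  have hfar : ∀ ζ : ℂ, δ⁻¹ ≤ ‖ζ‖ → ‖F.bub ζ - (2 : ℝ) • F.cen‖ ≤ 2 * δ := by
    intro ζ hζ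
    have h := F.bub_far ζ
    have h2 : ‖F.bub ζ - (2 : ℝ) • F.cen‖ * δ⁻¹ ≤ 2 :=
      (mul_le_mul_of_nonneg_left hζ (norm_nonneg _)).trans h
    rwa [← div_eq_mul_inv, div_le_iff₀ h0] at h2
  by_cases hne : y = (2 : ℝ) • F.cen
  · refine ⟨((δ⁻¹ : ℝ) : ℂ), by rw [ndi]; exact hd, ndi.le, ?_⟩
    rw [hne]
    exact (hfar _ ndi.ge).trans (by linarith)
  · obtain ⟨ζ, rfl⟩ := F.bub_surj y hy hne
    rcases lt_or_ge ‖ζ‖ δ with h | h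
    · refine ⟨δ, nd.ge, by rw [nd]; exact hd, ?_⟩
      have a := F.bub_norm ζ
      have b := F.bub_norm δ
      rw [nd] at b
      linarith [norm_sub_le (F.bub δ) (F.bub ζ)]
    rcases lt_or_ge δ⁻¹ ‖ζ‖ with h' | h'
    · refine ⟨((δ⁻¹ : ℝ) : ℂ), by rw [ndi]; exact hd, ndi.le, ?_⟩
      have a := hfar ζ h'.le
      have b := hfar _ ndi.ge
      rw [norm_sub_rev] at a
      have := norm_sub_le_norm_sub_add_norm_sub (F.bub ((δ⁻¹ : ℝ) : ℂ)) ((2 : ℝ) • F.cen) (F.bub ζ)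
      linarith
    · exact ⟨ζ, h, h', by simp; positivity⟩
end Fr

namespace BD
variable (B : BD)

theorem sol_eq (z : ℂ) : B.sol z = ∑ j, (B.F j).bub (B.hh j z) + reF B.gd.v z := by
  ext i
  have h : ((∑ j, (B.F j).bub (B.hh j z) : R3)) i = ∑ j, (B.F j).bub (B.hh j z) i := by
    simp
  rw [PiLp.add_apply, h]
  change (B.UU z (star z) i + B.gd.v (z, star z) i).re = _
  rw [Complex.add_re]
  congr 1
  rw [UU, Finset.sum_apply, Complex.re_sum]
  refine Finset.sum_congr rfl fun j _ => ?_
  change _ = ((B.F j).fB (B.hh j z) (star (B.hh j z)) (1 + B.hh j z * star (B.hh j z))⁻¹ i).re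
  rw [Uj, cc, star_hh]

def eta : ℝ := (B.k * (2 * B.M) +
  2 * (Real.exp (64 * (2 * B.K)) * 2)) * Real.exp (-(B.c * B.Λ))

theorem vR_norm (z : ℂ) (hz : ‖z‖ ≤ 1) :
    ‖reF B.gd.v z‖ ≤ 2 * (Real.exp (64 * (2 * B.K)) * (2 * Real.exp (-(B.c * B.Λ)))) := by
  set e := Real.exp (64 * (2 * B.K)) * (2 * Real.exp (-(B.c * B.Λ)))
  have he : 0 ≤ e := by positivity
  have h : ∀ i, (reF B.gd.v z i) ^ 2 ≤ e ^ 2 := by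
    intro i
    rw [sq_le_sq, abs_of_nonneg he]
    exact (Complex.abs_re_le_norm _).trans (B.v_small _ (B.diag z hz) i)
  rw [← sq_le_sq₀ (norm_nonneg _) (by positivity), Fr.R3_normsq]
  have := h 0; have := h 1; have := h 2
  nlinarith [sq_nonneg e]

theorem near (z : ℂ) (hz : ‖z‖ ≤ 1) (j) (h : ∀ i, i ≠ j → (star (B.pt i) * z).re ≤ 1 - B.c) :
    ‖B.sol z - (B.F j).bub (B.hh j z)‖ ≤ B.eta := by
  have hM := B.M_pos
  rw [sol_eq, ← Finset.add_sum_erase _ _ (Finset.mem_univ j), add_assoc, add_sub_cancel_left]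
  refine (norm_add_le _ _).trans ?_
  have h1 : ‖∑ i ∈ Finset.univ.erase j, (B.F i).bub (B.hh i z)‖ ≤
      B.k * (2 * B.M * Real.exp (-(B.c * B.Λ))) := by
    have : ∀ i ∈ Finset.univ.erase j, ‖(B.F i).bub (B.hh i z)‖ ≤
        2 * B.M * Real.exp (-(B.c * B.Λ)) := by
      intro i hi
      have hij := Finset.ne_of_mem_erase hi
      refine ((B.F i).bub_norm _).trans ?_
      rw [hh_norm, mul_assoc]
      have h2 : B.lam * (star (B.pt i) * z).re - B.Λ ≤ -(B.c * B.Λ) := by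
        have a := mul_le_mul_of_nonneg_left (h i hij) B.lam_pos.le
        have : B.lam * (1 - B.c) ≤ B.Λ * (1 - B.c) :=
          mul_le_mul_of_nonneg_right B.lam_le (by have := B.hc2; linarith)
        linarith
      gcongr
    refine (norm_sum_le_of_le _ this).trans ?_
    rw [Finset.sum_const, nsmul_eq_mul]
    have hc : ((Finset.univ.erase j).card : ℝ) ≤ B.k := by
      have := Finset.card_le_univ (Finset.univ.erase j)
      rw [Fintype.card_fin] at this
      exact_mod_cast this
    gcongr
  have h2 := B.vR_norm z hz
  rw [eta]
  linarith

theorem img_near (hk : 1 ≤ B.k) (z : ℂ) (hz : ‖z‖ ≤ 1) :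
    ∃ j, dist (B.sol z) ((B.F j).bub (B.hh j z)) ≤ B.eta := by
  by_cases hj : ∃ j, 1 - B.c < (star (B.pt j) * z).re
  · obtain ⟨j, hj⟩ := hj
    refine ⟨j, ?_⟩
    rw [dist_eq_norm]
    refine B.near z hz j fun i hij => ?_
    have := B.sep_or z hz i j hij
    linarith
  · push Not at hj
    refine ⟨⟨0, hk⟩, ?_⟩
    rw [dist_eq_norm]
    exact B.near z hz _ fun i _ => hj i

theorem near_img (δ : ℝ) (h0 : 0 < δ) (h1 : δ < 1) (hM : Real.exp 2 / δ ≤ B.M)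
    (hL : 7 ≤ B.Λ) (hL2 : Real.log (B.M / δ) ≤ B.c * (B.Λ - 1)) (j) (y : R3)
    (hy : y ∈ sphere (B.F j).cen 1) :
    ∃ z : ℂ, ‖z‖ ≤ 1 ∧ dist (B.sol z) y ≤ B.eta + 4 * δ := by
  obtain ⟨ζ, z1, z2, z3⟩ := (B.F j).bub_approx y hy δ h0 h1
  have hMp := B.M_pos
  have hζp : 0 < ‖ζ‖ := h0.trans_le z1
  have hζ0 : ζ ≠ 0 := norm_pos_iff.1 hζp
  have hlam := B.lam_pos
  set l := Complex.log (ζ / B.M) with hl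
  have hlre : l.re = Real.log (‖ζ‖ / B.M) := by
    rw [hl, Complex.log_re, norm_div, Complex.norm_real, Real.norm_of_nonneg hMp.le]
  have hl1 : l.re ≤ -2 := by
    rw [hlre, Real.log_le_iff_le_exp (by positivity), div_le_iff₀ hMp]
    refine z2.trans ?_
    rw [Real.exp_neg]
    have : (Real.exp 2)⁻¹ * (Real.exp 2 / δ) ≤ (Real.exp 2)⁻¹ * B.M := by gcongr
    refine le_trans (le_of_eq ?_) this
    field_simp
  have hl2 : -(B.c * B.lam) ≤ l.re := by
    have : -Real.log (B.M / δ) ≤ l.re := by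
      rw [hlre, ← Real.log_inv, inv_div]
      apply Real.log_le_log (by positivity)
      gcongr
    have e : B.lam = B.Λ - 1 := rfl
    rw [e]; linarith
  have hlim : l.im ^ 2 ≤ 10 := by
    have a : |l.im| ≤ Real.pi := by rw [hl, Complex.log_im]; exact Complex.abs_arg_le_pi _
    have b := Real.pi_lt_d2
    have : |l.im| ^ 2 ≤ 3.15 ^ 2 := by gcongr; linarith
    rw [sq_abs] at this
    norm_num at this; linarith
  set q : ℂ := (B.Λ + l) / B.lam with hq
  have hqre : q.re = (B.Λ + l.re) / B.lam := by
    rw [hq, Complex.div_ofReal_re]; simp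
  have hqim : q.im = l.im / B.lam := by
    rw [hq, Complex.div_ofReal_im]; simp
  have hp : star (B.pt j) * B.pt j = 1 := by
    rw [Complex.star_def, mul_comm, Complex.mul_conj, Complex.normSq_eq_norm_sq, B.hpt]; simp
  set z := B.pt j * q with hz
  have hpz : star (B.pt j) * z = q := by rw [hz, ← mul_assoc, hp, one_mul]
  have hΛ : B.Λ = B.lam + 1 := by rw [lam]; ring
  have hcl : B.c * B.lam ≤ B.lam / 2 := by have := B.hc2; nlinarith
  have hzn : ‖z‖ ≤ 1 := by
    rw [hz, norm_mul, B.hpt, one_mul, ← sq_le_one_iff₀ (norm_nonneg _), Complex.sq_norm,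
      Complex.normSq_apply, hqre, hqim]
    have e : (B.Λ + l.re) / B.lam * ((B.Λ + l.re) / B.lam) + l.im / B.lam * (l.im / B.lam) =
      ((B.Λ + l.re) ^ 2 + l.im ^ 2) / B.lam ^ 2 := by field_simp
    rw [e, div_le_one (by positivity)]
    have a1 : 0 ≤ B.Λ + l.re := by linarith
    have a2 : B.Λ + l.re ≤ B.lam - 1 := by linarith
    have a3 : (B.Λ + l.re) ^ 2 ≤ (B.lam - 1) ^ 2 := by gcongr
    nlinarith
  have hhz : B.hh j z = ζ := by
    rw [hh, mul_assoc, hpz, hq, mul_div_cancel₀ _ (by exact_mod_cast hlam.ne'), add_sub_cancel_left,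
      hl, Complex.exp_log (div_ne_zero hζ0 (by exact_mod_cast hMp.ne')),
      mul_div_cancel₀ _ (by exact_mod_cast hMp.ne')]
  refine ⟨z, hzn, ?_⟩
  have hn := B.near z hzn j fun i hij => by
    have h := B.sep_or z hzn i j hij
    have : 1 - B.c ≤ (star (B.pt j) * z).re := by
      rw [hpz, hqre, le_div_iff₀ hlam]
      linarith
    linarith
  rw [hhz] at hn
  rw [dist_eq_norm]
  have := norm_sub_le_norm_sub_add_norm_sub (B.sol z) ((B.F j).bub ζ) y
  linarith

theorem hausdorff (hk : 1 ≤ B.k) (δ : ℝ) (h0 : 0 < δ) (h1 : δ < 1) (hM : Real.exp 2 / δ ≤ B.M)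
    (hL : 7 ≤ B.Λ) (hL2 : Real.log (B.M / δ) ≤ B.c * (B.Λ - 1)) :
    hausdorffDist (B.sol '' closedBall (0 : ℂ) 1) (⋃ j, sphere (B.F j).cen 1) ≤ B.eta + 4 * δ := by
  have he : 0 ≤ B.eta := by have := B.M_pos; unfold eta; positivity
  refine hausdorffDist_le_of_mem_dist (by positivity) ?_ ?_
  · rintro _ ⟨z, hz, rfl⟩
    obtain ⟨j, hj⟩ := B.img_near hk z (by simpa using hz)
    exact ⟨_, Set.mem_iUnion.2 ⟨j, (B.F j).bub_sphere _⟩, by linarith⟩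
  · intro y hy
    obtain ⟨j, hj⟩ := Set.mem_iUnion.1 hy
    obtain ⟨z, hz, hd⟩ := B.near_img δ h0 h1 hM hL hL2 j y hj
    exact ⟨_, ⟨z, by simpa using hz, rfl⟩, by rwa [dist_comm]⟩
end BD

theorem exists_pts (k : ℕ) : ∃ (pt : Fin k → ℂ) (c : ℝ), (∀ j, ‖pt j‖ = 1) ∧ 0 < c ∧ c ≤ 1 / 2 ∧
    ∀ i j, i ≠ j → ‖pt i + pt j‖ ≤ 2 - 2 * c := by
  let pt : Fin k → ℂ := fun j => ⟨(j : ℝ) / k, Real.sqrt (1 - ((j : ℝ) / k) ^ 2)⟩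
  have hn : ∀ j, ‖pt j‖ = 1 := by
    intro j
    have h : ((j : ℝ) / k) ^ 2 ≤ 1 := by
      apply pow_le_one₀ (by positivity)
      apply div_le_one_of_le₀ _ (by positivity)
      exact_mod_cast j.2.le
    rw [← sq_eq_sq₀ (norm_nonneg _) zero_le_one, Complex.sq_norm, Complex.normSq_apply]
    have := Real.mul_self_sqrt (sub_nonneg.2 h)
    simp only [pt]
    rw [this]; ring
  have hlt : ∀ i j, i ≠ j → ‖pt i + pt j‖ < 2 := by
    intro i j hij
    have hk : (0 : ℝ) < k := by exact_mod_cast i.pos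
    have hne : pt i - pt j ≠ 0 := by
      intro h
      have h2 := congrArg Complex.re (sub_eq_zero.1 h)
      simp only [pt] at h2
      rw [div_left_inj' hk.ne'] at h2
      exact hij (Fin.ext (by exact_mod_cast h2))
    have hp := parallelogram_law_with_norm ℝ (pt i) (pt j)
    rw [hn, hn] at hp
    have := norm_pos_iff.2 hne
    nlinarith [norm_nonneg (pt i + pt j)]
  have hev : ∀ᶠ c : ℝ in nhdsWithin 0 (Set.Ioi 0), ∀ i j, i ≠ j → ‖pt i + pt j‖ ≤ 2 - 2 * c := by
    rw [eventually_all]; intro i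
    rw [eventually_all]; intro j
    by_cases hij : i = j
    · exact Eventually.of_forall fun _ h => absurd hij h
    · have ht : Tendsto (fun c : ℝ => 2 - 2 * c) (nhdsWithin 0 (Set.Ioi 0)) (nhds (2 - 2 * 0)) :=
        Tendsto.mono_left (Continuous.tendsto (by fun_prop) 0) nhdsWithin_le_nhds
      filter_upwards [ht.eventually_const_lt (by rw [mul_zero, sub_zero]; exact hlt i j hij)]
        with c hc _ using hc.le
  have h2 : ∀ᶠ c : ℝ in nhdsWithin 0 (Set.Ioi 0), c ∈ Set.Ioc (0 : ℝ) (1 / 2) :=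
    Ioc_mem_nhdsGT (by norm_num)
  obtain ⟨c, h, hc⟩ := (hev.and h2).exists
  exact ⟨pt, c, hn, hc.1, hc.2, h⟩

theorem exists_sol (k : ℕ) (hk : 1 ≤ k) (v : Fin k → R3) (hv : ∀ j, ‖v j‖ = 1) (ε : ℝ)
    (hε : 0 < ε) : ∃ (u : ℂ → R3) (O : Set ℂ), IsOpen O ∧ closedBall (0 : ℂ) 1 ⊆ O ∧
      ∀ z ∈ O, (ContDiffAt ℝ inf u z ∧ lap u z = (2 : ℝ) • cross (pdx u z) (pdy u z)) ∧
      hausdorffDist (u '' closedBall (0 : ℂ) 1) (⋃ j, sphere (v j) 1) ≤ ε := by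
  obtain ⟨pt, c, hpt, hc, hc2, hsep⟩ := exists_pts k
  have hF : ∀ j, ∃ F : Fr, F.v = (v j : Fin 3 → ℝ) := fun j => exists_frame _ (by
    rw [← Fr.R3_normsq, hv j, one_pow])
  choose F hF using hF
  have hcen : ∀ j, (F j).cen = v j := by
    intro j; ext i; simp only [Fr.cen]; rw [hF]
  set δ := min (ε / 8) (1 / 2) with hδ
  have hδ0 : 0 < δ := by positivity
  have hδ1 : δ ≤ 1 / 2 := min_le_right _ _
  have hδ2 : δ ≤ ε / 8 := min_le_left _ _
  set M := Real.exp 2 / δ with hM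
  have hM2 : 2 ≤ M := by
    rw [hM, le_div_iff₀ hδ0]
    have := Real.add_one_le_exp 2
    linarith
  have hlim : ∀ a : ℝ, Tendsto (fun Λ : ℝ => a * Real.exp (-(c * Λ))) atTop (nhds 0) := by
    intro a
    have : Tendsto (fun Λ : ℝ => Real.exp (-(c * Λ))) atTop (nhds 0) :=
      Real.tendsto_exp_neg_atTop_nhds_zero.comp (tendsto_id.const_mul_atTop hc)
    simpa using this.const_mul a
  have hsub : Tendsto (fun Λ : ℝ => Λ - 1) atTop atTop := tendsto_atTop_add_const_right _ _ tendsto_id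
  set K : ℝ := (k + 1) * (32 * (1 + M + M ^ 2)) * M with hK
  obtain ⟨Λ, h1, h2, h3, h4, h5⟩ := ((eventually_ge_atTop (7 : ℝ)).and
    (((hlim (Real.exp (64 * (2 * K)) * 2)).eventually_le_const (by norm_num : (0:ℝ) < 1 / 2)).and
    ((hsub.eventually_ge_atTop (2 * Real.log (2 * M ^ 2) ^ 3)).and
    (((hlim (k * (2 * M) + 2 * (Real.exp (64 * (2 * K)) * 2))).eventually_le_const
      (by positivity : (0:ℝ) < ε / 2)).and
    ((hsub.const_mul_atTop hc).eventually_ge_atTop (Real.log (M / δ))))))).exists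
  let B : BD := ⟨k, F, pt, M, Λ, c, hpt, hM2, by linarith, hc, hc2, hsep,
    by rw [← mul_assoc]; exact h2, h3⟩
  refine ⟨B.sol, {z | (z, star z) ∈ B.W}, B.W_open.preimage (by fun_prop), fun z hz =>
    B.diag z (by simpa using hz), fun z hz => ⟨B.sol_spec z hz, ?_⟩⟩
  have hh := B.hausdorff hk δ hδ0 (by linarith) le_rfl h1 h5
  have he : (⋃ j, sphere (B.F j).cen 1) = ⋃ j, sphere (v j) 1 :=
    Set.iUnion_congr fun j => by rw [← hcen j]
  rw [he] at hh
  have h4' : B.eta ≤ ε / 2 := h4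
  linarith

theorem exists_bdry (u : ℂ → R3) (O : Set ℂ) (hO : IsOpen O) (hsub : closedBall (0 : ℂ) 1 ⊆ O)
    (hu : ∀ z ∈ O, ContDiffAt ℝ inf u z) :
    ∃ g : ℂ → R3, ContDiff ℝ inf g ∧ ∀ z ∈ closedBall (0 : ℂ) 1, g z = u z := by
  obtain ⟨r, hr, hrO⟩ := (isCompact_closedBall (0 : ℂ) 1).exists_cthickening_subset_open hO hsub
  let f : ContDiffBump (0 : ℂ) := ⟨1, 1 + r, one_pos, by linarith⟩
  have hb : closedBall (0 : ℂ) (1 + r) ⊆ O := by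
    refine subset_trans ?_ hrO
    rw [cthickening_closedBall hr.le zero_le_one, add_comm]
  refine ⟨fun z => f z • u z, ?_, ?_⟩
  · rw [contDiff_iff_contDiffAt]
    intro z
    by_cases hz : z ∈ O
    · exact f.contDiffAt.smul (hu z hz)
    · have h1 : z ∉ tsupport f := by
        rw [f.tsupport_eq]; exact fun h => hz (hb h)
      have h2 := notMem_tsupport_iff_eventuallyEq.1 h1
      have : (fun z => f z • u z) =ᶠ[nhds z] fun _ => 0 := by
        filter_upwards [h2] with w hw
        rw [hw]; simp
      exact contDiffAt_const.congr_of_eventuallyEq this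
  · intro z hz
    dsimp only
    rw [f.one_of_mem_closedBall hz, one_smul]

/-- Given `k ≥ 1` unit spheres in `ℝ³`, each passing through the origin (centers `v j` with
`‖v j‖ = 1`), there exist positive `εₙ → 0`, smooth boundary data `gₙ`, and maps `uₙ`,
continuous on the closed unit disk and `C²` in the open disk, solving the H-system
`Δu = 2 uₓ ∧ u_y` in the disk with `uₙ = εₙ gₙ` on the boundary circle, whose images converge
in Hausdorff distance to the union of the spheres. -/
theorem multi_bubble_construction
    (k : ℕ) (hk : 1 ≤ k) (v : Fin k → R3) (hv : ∀ j, ‖v j‖ = 1) :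
    ∃ (ε : ℕ → ℝ) (g : ℕ → ℂ → R3) (u : ℕ → ℂ → R3),
      (∀ n, 0 < ε n) ∧
      Tendsto ε atTop (nhds 0) ∧
      (∀ n, ContDiff ℝ (⊤ : ℕ∞) (g n)) ∧
      (∀ n, ContinuousOn (u n) (closedBall (0 : ℂ) 1)) ∧
      (∀ n, ContDiffOn ℝ 2 (u n) (ball (0 : ℂ) 1)) ∧
      (∀ n, ∀ z ∈ ball (0 : ℂ) 1,
          lap (u n) z = (2 : ℝ) • cross (pdx (u n) z) (pdy (u n) z)) ∧
      (∀ n, ∀ z ∈ sphere (0 : ℂ) 1, u n z = ε n • g n z) ∧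
      Tendsto (fun n => hausdorffDist (u n '' closedBall (0 : ℂ) 1) (⋃ j, sphere (v j) 1))
        atTop (nhds 0) := by
  have hpos : ∀ n : ℕ, (0 : ℝ) < 1 / ((n : ℝ) + 1) := fun n => Nat.one_div_pos_of_nat
  choose u O hO hsub hu using fun n : ℕ => exists_sol k hk v hv _ (hpos n)
  choose g hg hgu using fun n => exists_bdry (u n) (O n) (hO n) (hsub n) fun z hz => (hu n z hz).1.1
  refine ⟨fun n => 1 / ((n : ℝ) + 1), fun n z => (1 / ((n : ℝ) + 1))⁻¹ • g n z, u, hpos,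
    tendsto_one_div_add_atTop_nhds_zero_nat, fun n => (hg n).const_smul _, ?_, ?_, ?_, ?_, ?_⟩
  · exact fun n z hz => (hu n z (hsub n hz)).1.1.continuousAt.continuousWithinAt
  · exact fun n z hz => ((hu n z (hsub n (ball_subset_closedBall hz))).1.1.of_le
      (WithTop.coe_le_coe.2 (le_top : (2 : ℕ∞) ≤ ⊤))).contDiffWithinAt
  · exact fun n z hz => (hu n z (hsub n (ball_subset_closedBall hz))).1.2
  · intro n z hz
    dsimp only
    rw [smul_smul, mul_inv_cancel₀ (hpos n).ne', one_smul, hgu n z (sphere_subset_closedBall hz)]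
  · refine squeeze_zero (fun n => hausdorffDist_nonneg) (fun n => ?_)
      tendsto_one_div_add_atTop_nhds_zero_nat
    exact (hu n 0 (hsub n (by simp))).2
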